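/- arXiv:1907.04371 — 9 statements merged into one kernel-verified Lean document; each statement's English description precedes it below -/
import Mathlib

section
/- Let n, s, q be integers with 1 ≤ q ≤ s ≤ n, let E be a real vector space, and let v : {1,…,n} → E. For each subset S ⊆ {1,…,n} with |S| = s, let Q(S) denote the set of the q smallest elements of S. Then ∑_{S ⊆ {1,…,n}, |S| = s} ∑_{i ∈ Q(S)} v_i = ∑_{j=1}^{n} ( ∑_{l=0}^{q-1} C(j-1, l)·C(n-j, s-l-1) ) · v_j. (This is the combinatorial core of Theorem 1: after relabeling indices so that the losses are nonincreasing, the top-q subsample average is an unbiased estimator of the γ-weighted ordered sum.) -/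
lemma count_aux (n s j l : ℕ) (hj : j ∈ Finset.Icc 1 n) (hl : l < s) :
    ((Finset.powersetCard s (Finset.Icc 1 n)).filter
      (fun S => j ∈ S ∧ (S.filter (· < j)).card = l)).card
      = Nat.choose (j - 1) l * Nat.choose (n - j) (s - l - 1) := by
  have h1 : Nat.choose (j - 1) l * Nat.choose (n - j) (s - l - 1)
      = (Finset.powersetCard l (Finset.Ico 1 j) ×ˢ
          Finset.powersetCard (s - l - 1) (Finset.Ioc j n)).card := by
    simp
  rw [h1]
  rw [Finset.mem_Icc] at hj
  refine Finset.card_nbij' (fun S => (S.filter (· < j), S.filter (j < ·)))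
    (fun p => insert j (p.1 ∪ p.2)) ?_ ?_ ?_ ?_
  · intro S hS
    simp only [Finset.coe_filter, Finset.mem_powersetCard, Set.mem_setOf_eq] at hS
    obtain ⟨⟨hS, hc⟩, hjS, hcl⟩ := hS
    have e1 := Finset.card_filter_add_card_filter_not (s := S) (· < j)
    have e2 : S.filter (fun x => ¬ x < j) = insert j (S.filter (j < ·)) := by
      ext x
      simp only [Finset.mem_filter, Finset.mem_insert]
      constructor
      · rintro ⟨a, b⟩
        by_cases h : x = j
        · exact Or.inl h
        · exact Or.inr ⟨a, by omega⟩
      · rintro (rfl | ⟨a, b⟩)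
        · exact ⟨hjS, by omega⟩
        · exact ⟨a, by omega⟩
    rw [e2, Finset.card_insert_of_notMem (by simp)] at e1
    simp only [Finset.coe_product, Set.mem_prod, Finset.mem_coe, Finset.mem_powersetCard]
    refine ⟨⟨?_, hcl⟩, ?_, by omega⟩
    · intro x hx
      rw [Finset.mem_filter] at hx
      have := Finset.mem_Icc.1 (hS hx.1)
      rw [Finset.mem_Ico]; omega
    · intro x hx
      rw [Finset.mem_filter] at hx
      have := Finset.mem_Icc.1 (hS hx.1)
      rw [Finset.mem_Ioc]; omega
  · rintro ⟨A, B⟩ hp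
    simp only [Finset.coe_product, Set.mem_prod, Finset.mem_coe, Finset.mem_powersetCard] at hp
    obtain ⟨⟨hA, hAc⟩, hB, hBc⟩ := hp
    have hA' : ∀ x ∈ A, 1 ≤ x ∧ x < j := fun x hx => Finset.mem_Ico.1 (hA hx)
    have hB' : ∀ x ∈ B, j < x ∧ x ≤ n := fun x hx => Finset.mem_Ioc.1 (hB hx)
    simp only [Finset.coe_filter, Finset.mem_powersetCard, Set.mem_setOf_eq]
    refine ⟨⟨?_, ?_⟩, by simp, ?_⟩
    · intro x hx
      rw [Finset.mem_Icc]
      grind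
    · rw [Finset.card_insert_of_notMem (by grind), Finset.card_union_of_disjoint]
      · omega
      · rw [Finset.disjoint_left]; grind
    · rw [← hAc]; congr 1; grind
  · intro S hS
    simp only [Finset.coe_filter, Finset.mem_powersetCard, Set.mem_setOf_eq] at hS
    grind
  · rintro ⟨A, B⟩ hp
    simp only [Finset.coe_product, Set.mem_prod, Finset.mem_coe, Finset.mem_powersetCard] at hp
    obtain ⟨⟨hA, hAc⟩, hB, hBc⟩ := hp
    have hA' : ∀ x ∈ A, 1 ≤ x ∧ x < j := fun x hx => Finset.mem_Ico.1 (hA hx)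
    have hB' : ∀ x ∈ B, j < x ∧ x ≤ n := fun x hx => Finset.mem_Ioc.1 (hB hx)
    simp only [Prod.mk.injEq]
    constructor
    · grind
    · grind

lemma mem_aux (S Q : Finset ℕ) (q : ℕ) (h1 : Q ⊆ S) (h2 : Q.card = q)
    (h3 : ∀ i ∈ Q, ∀ j ∈ S \ Q, i < j) (i : ℕ) :
    i ∈ Q ↔ i ∈ S ∧ (S.filter (· < i)).card < q := by
  constructor
  · intro hi
    refine ⟨h1 hi, ?_⟩
    rw [← h2]
    apply Finset.card_lt_card
    rw [Finset.ssubset_iff_of_subset]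
    · exact ⟨i, hi, by simp⟩
    · intro x hx
      rw [Finset.mem_filter] at hx
      by_contra hc
      have := h3 i hi x (Finset.mem_sdiff.2 ⟨hx.1, hc⟩)
      omega
  · rintro ⟨hi, hc⟩
    by_contra hn
    have : Q ⊆ S.filter (· < i) := fun x hx =>
      Finset.mem_filter.2 ⟨h1 hx, h3 x hx i (Finset.mem_sdiff.2 ⟨hi, hn⟩)⟩
    have := Finset.card_le_card this
    omega

/-- Combinatorial core of Theorem 1 (ordered SGD): summing, over all
`s`-element subsets `S` of `{1,…,n}`, the vectors attached to the `q` smallest elements of `S`,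
yields the `γ`-weighted sum `∑_j (∑_{l<q} C(j-1,l)·C(n-j,s-l-1)) • v j`. -/
theorem stmt_0 (n s q : ℕ) (hq : 1 ≤ q) (hqs : q ≤ s) (hsn : s ≤ n)
    (E : Type*) [AddCommGroup E] [Module ℝ E] (v : ℕ → E)
    (Q : Finset ℕ → Finset ℕ)
    (hQ : ∀ S ∈ Finset.powersetCard s (Finset.Icc 1 n),
      Q S ⊆ S ∧ (Q S).card = q ∧ ∀ i ∈ Q S, ∀ j ∈ S \ Q S, i < j) :
    ∑ S ∈ Finset.powersetCard s (Finset.Icc 1 n), ∑ i ∈ Q S, v i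
      = ∑ j ∈ Finset.Icc 1 n,
          (∑ l ∈ Finset.range q, Nat.choose (j - 1) l * Nat.choose (n - j) (s - l - 1)) • v j := by
  have e : ∀ S ∈ Finset.powersetCard s (Finset.Icc 1 n), ∑ i ∈ Q S, v i
      = ∑ i ∈ Finset.Icc 1 n, if i ∈ S ∧ (S.filter (· < i)).card < q then v i else 0 := by
    intro S hS
    obtain ⟨h1, h2, h3⟩ := hQ S hS
    rw [← Finset.sum_filter]
    apply Finset.sum_congr _ (fun _ _ => rfl)
    ext i
    rw [Finset.mem_filter, ← mem_aux S (Q S) q h1 h2 h3 i]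
    exact ⟨fun h => ⟨(Finset.mem_powersetCard.1 hS).1 (h1 h), h⟩, fun h => h.2⟩
  rw [Finset.sum_congr rfl e, Finset.sum_comm]
  refine Finset.sum_congr rfl fun j hj => ?_
  rw [← Finset.sum_filter, Finset.sum_const]
  congr 1
  rw [Finset.card_eq_sum_card_fiberwise (f := fun S => (S.filter (· < j)).card)
    (t := Finset.range q)]
  · refine Finset.sum_congr rfl fun l hl => ?_
    rw [Finset.mem_range] at hl
    rw [← count_aux n s j l hj (by omega), Finset.filter_filter]
    congr 1
    apply Finset.filter_congr
    intro S _
    constructor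
    · rintro ⟨⟨a, _⟩, c⟩
      exact ⟨a, c⟩
    · rintro ⟨a, c⟩
      exact ⟨⟨a, by omega⟩, c⟩
  · intro S hS
    have := (Finset.mem_filter.1 (Finset.mem_coe.1 hS)).2.2
    simpa using this
end

section
/- Let n, s, q be integers with 1 ≤ q ≤ s ≤ n. The sequence (γ_j)_{j=1}^{n} is nonincreasing in j; equivalently, for every integer j with 1 ≤ j ≤ n-1, ∑_{l=0}^{q-1} C(j, l)·C(n-j-1, s-l-1) ≤ ∑_{l=0}^{q-1} C(j-1, l)·C(n-j, s-l-1). -/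
theorem aux_tel (a b s q : ℕ) (h : q + 1 ≤ s) :
    ∑ l ∈ Finset.range (q + 1), Nat.choose (a + 1) l * Nat.choose b (s - l - 1)
      + Nat.choose a q * Nat.choose (b + 1) (s - q - 1)
    = ∑ l ∈ Finset.range (q + 1), Nat.choose a l * Nat.choose (b + 1) (s - l - 1)
      + Nat.choose a q * Nat.choose b (s - q - 1) := by
  induction q with
  | zero => simp; ring
  | succ q ih =>
    have ih := ih (by omega)
    rw [Finset.sum_range_succ, Finset.sum_range_succ _ (q + 1)]
    obtain ⟨m, rfl⟩ : ∃ m, s = m + q + 2 := ⟨s - q - 2, by omega⟩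
    have e1 : m + q + 2 - (q + 1) - 1 = m := by omega
    have e2 : m + q + 2 - q - 1 = m + 1 := by omega
    rw [e2, Nat.choose_succ_succ' b m] at ih
    rw [e1, Nat.choose_succ_succ' a q]
    linarith

/-- The sequence `(γ_j)_{j=1}^n` is nonincreasing in `j`: for `1 ≤ j ≤ n-1`,
`∑_{l=0}^{q-1} C(j, l)·C(n-j-1, s-l-1) ≤ ∑_{l=0}^{q-1} C(j-1, l)·C(n-j, s-l-1)`. -/
theorem stmt_5 (n s q : ℕ) (hq : 1 ≤ q) (hqs : q ≤ s) (hsn : s ≤ n) :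
    ∀ j : ℕ, 1 ≤ j → j ≤ n - 1 →
      ∑ l ∈ Finset.range q, Nat.choose j l * Nat.choose (n - j - 1) (s - l - 1)
        ≤ ∑ l ∈ Finset.range q, Nat.choose (j - 1) l * Nat.choose (n - j) (s - l - 1) := by
  intro j hj hjn
  obtain ⟨a, rfl⟩ : ∃ a, j = a + 1 := ⟨j - 1, by omega⟩
  obtain ⟨b, rfl⟩ : ∃ b, n = a + 1 + (b + 1) := ⟨n - a - 2, by omega⟩
  obtain ⟨p, rfl⟩ : ∃ p, q = p + 1 := ⟨q - 1, by omega⟩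
  rw [Nat.add_sub_cancel_left, Nat.add_sub_cancel, Nat.add_sub_cancel]
  have h := aux_tel a b s p hqs
  have h2 : Nat.choose a p * Nat.choose b (s - p - 1)
      ≤ Nat.choose a p * Nat.choose (b + 1) (s - p - 1) :=
    Nat.mul_le_mul_left _ (Nat.choose_le_choose _ (Nat.le_succ b))
  omega
end

section
/- Let n, s, q be integers with 1 ≤ q ≤ s ≤ n and let a ∈ ℝ^n. Then (1/q) ∑_{j=1}^{n} γ_j · a_{(j)} ≥ (1/n) ∑_{i=1}^{n} a_i. (This is the pointwise form of the claim Q_n(Θ; s, q) ≥ 0 in Theorem 3: the ordered weighted empirical loss dominates the empirical average loss.) -/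
theorem aux_step (j M r : ℕ) : ∀ q, q + 1 ≤ r →
    ∑ l ∈ Finset.range (q+1), Nat.choose j l * Nat.choose (M+1) (r-l) =
    ∑ l ∈ Finset.range (q+1), Nat.choose (j+1) l * Nat.choose M (r-l)
      + Nat.choose j q * Nat.choose M (r-q-1) := by
  intro q
  induction q with
  | zero =>
    intro h
    obtain ⟨k, rfl⟩ : ∃ k, r = k + 1 := ⟨r - 1, by omega⟩
    simp [Nat.choose_succ_succ']
    ring
  | succ q ih =>
    intro h
    rw [Finset.sum_range_succ, ih (by omega), Finset.sum_range_succ _ (q+1)]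
    obtain ⟨k, rfl⟩ : ∃ k, r = k + 1 + (q + 1) := ⟨r - q - 2, by omega⟩
    have h1 : k + 1 + (q+1) - q - 1 = k + 1 := by omega
    have h2 : k + 1 + (q+1) - (q+1) = k + 1 := by omega
    rw [h1, h2]
    simp only [Nat.choose_succ_succ', Nat.add_sub_cancel]
    ring

theorem aux_anti (j M r q : ℕ) (hq : q ≤ r + 1) :
    ∑ l ∈ Finset.range q, Nat.choose (j+1) l * Nat.choose M (r-l) ≤
    ∑ l ∈ Finset.range q, Nat.choose j l * Nat.choose (M+1) (r-l) := by
  rcases q with _ | q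
  · simp
  rcases Nat.lt_or_ge q r with h | h
  · rw [aux_step j M r q h]; omega
  · obtain rfl : q = r := by omega
    rcases q with _ | q
    · simp
    · rw [Finset.sum_range_succ, Finset.sum_range_succ _ (q+1), aux_step j M (q+1) q le_rfl]
      simp [Nat.choose_succ_succ']
      omega

theorem aux_sum (l : ℕ) : ∀ N k, ∑ j ∈ Finset.range (N+1), Nat.choose j l * Nat.choose (N-j) k
    = Nat.choose (N+1) (l+k+1) := by
  intro N
  induction N with
  | zero =>
    intro k
    rcases l with _ | l <;> rcases k with _ | k <;> simp [Nat.choose_succ_succ', ← add_assoc]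
  | succ N ih =>
    intro k
    rw [Finset.sum_range_succ]
    rcases k with _ | k
    · have := ih 0
      simp only [Nat.choose_zero_right] at this ⊢
      rw [this, Nat.choose_succ_succ' (N+1)]
      simp; ring
    · have h : ∀ j ∈ Finset.range (N+1), Nat.choose j l * Nat.choose (N+1-j) (k+1) =
          Nat.choose j l * Nat.choose (N-j) k + Nat.choose j l * Nat.choose (N-j) (k+1) := by
        intro j hj
        have : j ≤ N := by simpa [Nat.lt_succ_iff] using hj
        rw [Nat.succ_sub this, Nat.choose_succ_succ', mul_add]
      rw [Finset.sum_congr rfl h, Finset.sum_add_distrib, ih, ih]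
      rw [show l + (k+1) + 1 = (l + k + 1) + 1 by ring, Nat.choose_succ_succ' (N+1)]
      simp

/-- Pointwise form of `Q_n(Θ; s, q) ≥ 0` (Theorem 3): for any `a ∈ ℝⁿ`, the
ordered `γ`-weighted average `(1/q) ∑_j γ_j a_{(j)}` dominates the plain average `(1/n) ∑_i a_i`.
Here `σ` is a permutation sorting `a` in nonincreasing order, so `a (σ j) = a_{(j+1)}` and the
`γ`-weight of position `j : Fin n` is `(∑_{l<q} C(j, l)·C(n-1-j, s-l-1)) / C(n, s)`. -/
theorem stmt_7 (n s q : ℕ) (hq : 1 ≤ q) (hqs : q ≤ s) (hsn : s ≤ n)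
    (a : Fin n → ℝ) (σ : Equiv.Perm (Fin n)) (hσ : Antitone (a ∘ σ)) :
    (1 / (n : ℝ)) * ∑ i, a i ≤
      (1 / (q : ℝ)) * ∑ j : Fin n,
        (((∑ l ∈ Finset.range q,
              Nat.choose j.val l * Nat.choose (n - 1 - j.val) (s - l - 1) : ℕ) : ℝ)
            / (Nat.choose n s : ℝ)) * a (σ j) := by
  obtain ⟨r, rfl⟩ : ∃ r, s = r + 1 := ⟨s - 1, by omega⟩
  obtain ⟨N, rfl⟩ : ∃ N, n = N + 1 := ⟨n - 1, by omega⟩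
  have hr : ∀ l, r + 1 - l - 1 = r - l := by intro l; omega
  simp only [hr, Nat.add_sub_cancel]
  set w : ℕ → ℕ := fun j => ∑ l ∈ Finset.range q, Nat.choose j l * Nat.choose (N - j) (r - l)
    with hw
  have hstep : ∀ j, j < N → w (j+1) ≤ w j := by
    intro j hj
    have := aux_anti j (N - (j+1)) r q hqs
    rwa [show N - (j+1) + 1 = N - j by omega] at this
  have hanti : ∀ i j, i ≤ j → j ≤ N → w j ≤ w i := by
    intro i j hij
    induction j, hij using Nat.le_induction with
    | base => intro _; exact le_rfl
    | succ j _ ih => intro h; exact (hstep j (by omega)).trans (ih (by omega))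
  have hsum : ∑ j : Fin (N+1), w j = q * Nat.choose (N+1) (r+1) := by
    rw [Fin.sum_univ_eq_sum_range w, hw, Finset.sum_comm]
    rw [Finset.sum_congr rfl (g := fun _ => Nat.choose (N+1) (r+1))]
    · simp
    · intro l hl
      have : l < q := by simpa using hl
      rw [aux_sum, show l + (r - l) + 1 = r + 1 by omega]
  have hmono : Monovary (fun j : Fin (N+1) => (w j : ℝ)) (a ∘ σ) := by
    apply Antitone.monovary _ hσ
    intro i j hij
    show (w j : ℝ) ≤ (w i : ℝ)
    exact_mod_cast hanti i j hij (by omega)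
  have hch := hmono.sum_mul_sum_le_card_mul_sum
  have hs' : ∑ j : Fin (N+1), (w j : ℝ) = q * (Nat.choose (N+1) (r+1) : ℝ) := by
    exact_mod_cast hsum
  have ha : ∑ j, (a ∘ σ) j = ∑ i, a i := Equiv.sum_comp σ a
  rw [hs', ha, Fintype.card_fin] at hch
  have hC : (0:ℝ) < (Nat.choose (N+1) (r+1) : ℝ) := by exact_mod_cast Nat.choose_pos hsn
  have hq' : (0:ℝ) < q := by exact_mod_cast hq
  have hn' : (0:ℝ) < ((N+1 : ℕ) : ℝ) := by positivity
  have e : ∑ j : Fin (N+1), ((w j : ℕ) : ℝ) / (Nat.choose (N+1) (r+1) : ℝ) * a (σ j)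
      = (∑ j : Fin (N+1), (w j : ℝ) * (a ∘ σ) j) / (Nat.choose (N+1) (r+1) : ℝ) := by
    rw [Finset.sum_div]
    refine Finset.sum_congr rfl fun j _ => ?_
    simp only [Function.comp]; ring
  change _ ≤ (1 / (q:ℝ)) * ∑ j : Fin (N+1), ((w j : ℕ) : ℝ) / (Nat.choose (N+1) (r+1) : ℝ) * a (σ j)
  rw [e, one_div_mul_eq_div, one_div_mul_eq_div, div_div, div_le_div_iff₀ hn' (by positivity)]
  linarith
end

section
/- Fix integers s ≥ 1 and l with 0 ≤ l ≤ s-1, and fix a real number z ∈ (0, 1). Let j : ℕ → ℕ be any sequence such that j(n)/n → z as n → ∞. Then the ratio C(n-s, j(n)-1-l) / C(n-1, j(n)-1) converges to z^l · (1-z)^{s-l-1} as n → ∞. -/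
open Filter in
lemma aux_tend (z : ℝ) (j : ℕ → ℕ)
    (hj : Tendsto (fun n => (j n : ℝ) / (n : ℝ)) atTop (nhds z)) (c d : ℝ) :
    Tendsto (fun n : ℕ => ((j n : ℝ) - c) / ((n : ℝ) - d)) atTop (nhds z) := by
  have h1 : Tendsto (fun n : ℕ => ((j n : ℝ) / n - c / n) / (1 - d / n)) atTop
      (nhds ((z - 0) / (1 - 0))) :=
    (hj.sub (tendsto_const_div_atTop_nhds_zero_nat c)).div
      (tendsto_const_nhds.sub (tendsto_const_div_atTop_nhds_zero_nat d)) (by norm_num)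
  simp only [sub_zero, div_one] at h1
  refine h1.congr' ?_
  filter_upwards [eventually_gt_atTop 0] with n hn
  have hn' : (n : ℝ) ≠ 0 := by positivity
  rw [← sub_div, one_sub_div hn', div_div_div_cancel_right₀ hn']

open Filter in
lemma aux_ev (z : ℝ) (hz0 : 0 < z) (hz1 : z < 1) (j : ℕ → ℕ)
    (hj : Tendsto (fun n => (j n : ℝ) / (n : ℝ)) atTop (nhds z)) (c : ℕ) :
    ∀ᶠ n in atTop, c ≤ j n ∧ j n + c ≤ n := by
  have h1 := (aux_tend z j hj c 0).eventually_const_lt hz0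
  have h2 := (aux_tend z j hj (-c) 0).eventually_lt_const hz1
  filter_upwards [h1, h2, eventually_gt_atTop 0] with n a b hn
  have hn' : (0 : ℝ) < n := by positivity
  simp only [sub_zero, sub_neg_eq_add] at a b
  rw [div_lt_one hn'] at b
  rw [lt_div_iff₀ hn'] at a
  constructor
  · have : (c : ℝ) < j n := by linarith
    exact_mod_cast this.le
  · exact_mod_cast b.le

open Filter in
lemma aux_main (z : ℝ) (hz0 : 0 < z) (hz1 : z < 1) (j : ℕ → ℕ)
    (hj : Tendsto (fun n => (j n : ℝ) / (n : ℝ)) atTop (nhds z)) (l m : ℕ) :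
    Tendsto (fun n => (Nat.choose (n - (1 + l + m)) (j n - 1 - l) : ℝ) /
      (Nat.choose (n - 1) (j n - 1) : ℝ)) atTop (nhds (z ^ l * (1 - z) ^ m)) := by
  induction m with
  | zero =>
    induction l with
    | zero =>
      simp only [pow_zero, mul_one]
      refine tendsto_const_nhds.congr' ?_
      filter_upwards [aux_ev z hz0 hz1 j hj 1] with n hn
      have : 0 < Nat.choose (n - 1) (j n - 1) := Nat.choose_pos (by omega)
      have h' : (0 : ℝ) < (Nat.choose (n - 1) (j n - 1) : ℝ) := by exact_mod_cast this
      exact (div_self h'.ne').symm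
    | succ l ih =>
      have h := ih.mul (aux_tend z j hj (1 + l) (1 + l))
      rw [show z ^ (l + 1) * (1 - z) ^ 0 = z ^ l * (1 - z) ^ 0 * z by ring]
      refine h.congr' ?_
      filter_upwards [aux_ev z hz0 hz1 j hj (l + 5)] with n hn
      obtain ⟨b, hb⟩ : ∃ b, j n = b + 1 + (1 + l) := ⟨j n - (l + 2), by omega⟩
      obtain ⟨a, ha⟩ : ∃ a, n = a + 1 + (1 + l) := ⟨n - (l + 2), by omega⟩
      have e := Nat.add_one_mul_choose_eq a b
      rw [show n - (1 + l + 0) = a + 1 by omega, show j n - 1 - l = b + 1 by omega,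
        show n - (1 + (l + 1) + 0) = a by omega, show j n - 1 - (l + 1) = b by omega,
        show (j n : ℝ) - (1 + l) = b + 1 by rw [hb]; push_cast; ring,
        show (n : ℝ) - (1 + l) = a + 1 by rw [ha]; push_cast; ring]
      have e' : ((a : ℝ) + 1) * (a.choose b) = ((a + 1).choose (b + 1)) * (b + 1) := by
        exact_mod_cast e
      have : (a : ℝ) + 1 ≠ 0 := by positivity
      rw [div_mul_div_comm, ← e', mul_comm ((a : ℝ) + 1), mul_div_mul_right _ _ this]
  | succ m ih =>
    have h := ih.mul ((aux_tend z j hj (1 + l) (1 + l + m)).const_sub 1)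
    rw [show z ^ l * (1 - z) ^ (m + 1) = z ^ l * (1 - z) ^ m * (1 - z) by ring]
    refine h.congr' ?_
    filter_upwards [aux_ev z hz0 hz1 j hj (l + m + 5)] with n hn
    obtain ⟨b, hb⟩ : ∃ b, j n = b + (1 + l) := ⟨j n - (l + 1), by omega⟩
    obtain ⟨a, ha⟩ : ∃ a, n = a + 1 + (1 + l + m) := ⟨n - (l + m + 2), by omega⟩
    have e := Nat.choose_mul_succ_eq a b
    have hab : b ≤ a + 1 := by omega
    rw [show n - (1 + l + m) = a + 1 by omega, show j n - 1 - l = b by omega,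
      show n - (1 + l + (m + 1)) = a by omega,
      show (j n : ℝ) - (1 + l) = b by rw [hb]; push_cast; ring,
      show (n : ℝ) - (1 + l + m) = a + 1 by rw [ha]; push_cast; ring]
    have e' : ((a.choose b : ℕ) : ℝ) * (a + 1) = ((a + 1).choose b) * (a + 1 - b) := by
      have := congrArg (Nat.cast : ℕ → ℝ) e
      push_cast [Nat.cast_sub hab] at this
      exact this
    have : (a : ℝ) + 1 ≠ 0 := by positivity
    rw [one_sub_div this, div_mul_div_comm, ← e', mul_div_mul_right _ _ this]


/-- If `j(n)/n → z ∈ (0,1)`, then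
`C(n-s, j(n)-1-l) / C(n-1, j(n)-1) → z^l (1-z)^{s-l-1}` as `n → ∞`. -/
theorem stmt_9 (s l : ℕ) (hs : 1 ≤ s) (hl : l ≤ s - 1) (z : ℝ) (hz0 : 0 < z) (hz1 : z < 1)
    (j : ℕ → ℕ) (hj : Filter.Tendsto (fun n => (j n : ℝ) / (n : ℝ)) Filter.atTop (nhds z)) :
    Filter.Tendsto
      (fun n => (Nat.choose (n - s) (j n - 1 - l) : ℝ) / (Nat.choose (n - 1) (j n - 1) : ℝ))
      Filter.atTop (nhds (z ^ l * (1 - z) ^ (s - l - 1))) := by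

  have h := aux_main z hz0 hz1 j hj l (s - l - 1)
  rwa [show 1 + l + (s - l - 1) = s by omega] at h
end

section
/- Fix integers s, q with 1 ≤ q ≤ s and a real number z ∈ (0, 1). Let j : ℕ → ℕ be any sequence with j(n)/n → z as n → ∞. For each n ≥ s, let γ_{n, j(n)} := (∑_{l=0}^{q-1} C(j(n)-1, l)·C(n-j(n), s-l-1)) / C(n, s). Then n · γ_{n, j(n)} → γ(z) as n → ∞, where γ(z) := ∑_{l=0}^{q-1} z^l (1-z)^{s-l-1} · s!/(l!·(s-l-1)!). (Proposition 1.) -/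
theorem aux_choose (a : ℕ → ℕ) (c : ℝ)
    (h : Filter.Tendsto (fun n => (a n : ℝ) / (n : ℝ)) Filter.atTop (nhds c)) (k : ℕ) :
    Filter.Tendsto (fun n : ℕ => ((a n).choose k : ℝ) / (n : ℝ) ^ k) Filter.atTop
      (nhds (c ^ k / (k.factorial : ℝ))) := by
  induction k with
  | zero => simp
  | succ k ih =>
    have h0 : Filter.Tendsto (fun n : ℕ => (k : ℝ) / (n : ℝ)) Filter.atTop (nhds 0) :=
      tendsto_const_div_atTop_nhds_zero_nat _
    have h1 := (ih.mul (h.sub h0)).div_const ((k : ℝ) + 1)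
    have e : c ^ k / (k.factorial : ℝ) * (c - 0) / ((k : ℝ) + 1)
        = c ^ (k + 1) / ((k + 1).factorial : ℝ) := by
      have : (k.factorial : ℝ) ≠ 0 := by positivity
      have : (k : ℝ) + 1 ≠ 0 := by positivity
      rw [Nat.factorial_succ]; push_cast; field_simp; ring
    rw [e] at h1
    refine h1.congr' ?_
    filter_upwards [Filter.eventually_gt_atTop 0] with n hn
    have hn' : (n : ℝ) ≠ 0 := by positivity
    have hk : (k : ℝ) + 1 ≠ 0 := by positivity
    have key : ((a n).choose (k + 1) : ℝ) * ((k : ℝ) + 1) = (a n).choose k * ((a n : ℝ) - k) := by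
      rcases lt_or_ge (a n) k with hlt | hge
      · simp [Nat.choose_eq_zero_of_lt hlt, Nat.choose_eq_zero_of_lt (Nat.lt_succ_of_lt hlt)]
      · have := Nat.choose_succ_right_eq (a n) k
        rw [← Nat.cast_sub hge]
        exact_mod_cast this
    rw [← sub_div, pow_succ, div_mul_div_comm, ← key]
    field_simp

/-- Proposition 1. If `j(n)/n → z ∈ (0,1)`, then
`n · γ_{n, j(n)} → γ(z) = ∑_{l=0}^{q-1} z^l (1-z)^{s-l-1} · s!/(l!·(s-l-1)!)`. -/
theorem stmt_10 (s q : ℕ) (hq : 1 ≤ q) (hqs : q ≤ s) (z : ℝ) (hz0 : 0 < z) (hz1 : z < 1)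
    (j : ℕ → ℕ) (hj : Filter.Tendsto (fun n => (j n : ℝ) / (n : ℝ)) Filter.atTop (nhds z)) :
    Filter.Tendsto
      (fun n : ℕ => (n : ℝ) *
        (((∑ l ∈ Finset.range q,
              Nat.choose (j n - 1) l * Nat.choose (n - j n) (s - l - 1) : ℕ) : ℝ)
          / (Nat.choose n s : ℝ)))
      Filter.atTop
      (nhds (∑ l ∈ Finset.range q,
        z ^ l * (1 - z) ^ (s - l - 1) *
          ((Nat.factorial s : ℝ) / ((Nat.factorial l : ℝ) * (Nat.factorial (s - l - 1) : ℝ))))) := by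
  have hjn : ∀ᶠ n in Filter.atTop, 1 ≤ j n ∧ j n ≤ n := by
    filter_upwards [hj.eventually_const_lt hz0, hj.eventually_lt_const hz1,
      Filter.eventually_gt_atTop 0] with n h1 h2 hn
    have hn' : (0 : ℝ) < n := by positivity
    rw [div_lt_one hn'] at h2
    constructor
    · by_contra hc
      have : j n = 0 := by omega
      simp [this] at h1
    · exact_mod_cast h2.le
  have hone : Filter.Tendsto (fun n : ℕ => (1 : ℝ) / (n : ℝ)) Filter.atTop (nhds 0) :=
    tendsto_const_div_atTop_nhds_zero_nat _
  have hself : Filter.Tendsto (fun n : ℕ => (n : ℝ) / (n : ℝ)) Filter.atTop (nhds 1) := by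
    refine tendsto_const_nhds.congr' ?_
    filter_upwards [Filter.eventually_gt_atTop 0] with n hn
    have hn' : (n : ℝ) ≠ 0 := by positivity
    rw [div_self hn']
  have hA : Filter.Tendsto (fun n => ((j n - 1 : ℕ) : ℝ) / (n : ℝ)) Filter.atTop (nhds z) := by
    have := hj.sub hone
    rw [sub_zero] at this
    refine this.congr' ?_
    filter_upwards [hjn] with n hn
    rw [Nat.cast_sub hn.1, sub_div, Nat.cast_one]
  have hB : Filter.Tendsto (fun n => ((n - j n : ℕ) : ℝ) / (n : ℝ)) Filter.atTop
      (nhds (1 - z)) := by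
    refine (hself.sub hj).congr' ?_
    filter_upwards [hjn] with n hn
    rw [Nat.cast_sub hn.2, sub_div]
  have hC := aux_choose (fun n => n) 1 hself s
  have hs : (s.factorial : ℝ) ≠ 0 := by positivity
  have hne : (1 : ℝ) ^ s / (s.factorial : ℝ) ≠ 0 := by
    rw [one_pow]; positivity
  have hmain := tendsto_finsetSum (Finset.range q) (fun l _ =>
    ((aux_choose _ z hA l).mul (aux_choose _ (1 - z) hB (s - l - 1))).div hC hne)
  have e : (∑ l ∈ Finset.range q, z ^ l / (l.factorial : ℝ) *
      ((1 - z) ^ (s - l - 1) / ((s - l - 1).factorial : ℝ)) / ((1 : ℝ) ^ s / (s.factorial : ℝ)))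
      = ∑ l ∈ Finset.range q, z ^ l * (1 - z) ^ (s - l - 1) *
          ((Nat.factorial s : ℝ) / ((Nat.factorial l : ℝ) * (Nat.factorial (s - l - 1) : ℝ))) := by
    refine Finset.sum_congr rfl fun l _ => ?_
    rw [one_pow, div_mul_div_comm, div_div_eq_mul_div, div_one]
    ring
  rw [e] at hmain
  refine hmain.congr' ?_
  filter_upwards [Filter.eventually_ge_atTop s, Filter.eventually_gt_atTop 0] with n hns hn
  have hn' : (n : ℝ) ≠ 0 := by positivity
  have hc : (n.choose s : ℝ) ≠ 0 := by
    exact_mod_cast (Nat.choose_pos hns).ne'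
  push_cast
  rw [Finset.sum_div, Finset.mul_sum]
  refine Finset.sum_congr rfl fun l hl => ?_
  have hl' := Finset.mem_range.mp hl
  have hp : (n : ℝ) ^ s = (n : ℝ) ^ l * (n : ℝ) ^ (s - l - 1) * n := by
    rw [← pow_add, ← pow_succ]; congr 1; omega
  simp only [Pi.div_apply]
  rw [hp, div_mul_div_comm, div_div_div_eq]
  have h1 : (n : ℝ) ^ l ≠ 0 := pow_ne_zero _ hn'
  have h2 : (n : ℝ) ^ (s - l - 1) ≠ 0 := pow_ne_zero _ hn'
  generalize (n : ℝ) ^ l = x at *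
  generalize (n : ℝ) ^ (s - l - 1) = y at *
  field_simp
end

section
/- Let n, s, q be integers with 1 ≤ q ≤ s ≤ n, let E be a real inner product space, let ρ ≥ 0, let L_1,…,L_n : E → ℝ be ρ-weakly convex (i.e., θ ↦ L_i(θ) + (ρ/2)‖θ‖² is convex for each i), and let R : E → ℝ be convex. Define L_q(θ) := (1/q) ∑_{j=1}^{n} γ_j · b_{(j)}(θ) + R(θ), where b_{(1)}(θ) ≥ ⋯ ≥ b_{(n)}(θ) are the values L_1(θ),…,L_n(θ) sorted in nonincreasing order (with multiplicity). Then L_q is ρ-weakly convex, i.e., θ ↦ L_q(θ) + (ρ/2)‖θ‖² is convex. (Claimed in the proof of Theorem 2, part 2.) -/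
/-- `sortDesc a` is the vector `a : Fin n → ℝ` sorted in nonincreasing order (with multiplicity). -/
noncomputable def sortDesc {n : ℕ} (a : Fin n → ℝ) : Fin n → ℝ :=
  fun j => a (Tuple.sort (fun i => -a i) j)

/-- `gammaR n s q j` is the coefficient `γ_{j+1} = (∑_{l=0}^{q-1} C(j, l)·C(n-1-j, s-l-1)) / C(n,s)`
(with the `Fin n` index `j` corresponding to the paper's index `j+1 ∈ {1,…,n}`). -/
noncomputable def gammaR (n s q : ℕ) (j : Fin n) : ℝ :=
  ((∑ l ∈ Finset.range q,
      Nat.choose j.val l * Nat.choose (n - 1 - j.val) (s - l - 1) : ℕ) : ℝ)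
    / (Nat.choose n s : ℝ)

lemma aux_sum_choose (m : ℕ) : ∀ a b : ℕ,
    ∑ j ∈ Finset.range (m + 1), Nat.choose j a * Nat.choose (m - j) b
      = Nat.choose (m + 1) (a + b + 1) := by
  induction m with
  | zero =>
    intro a b
    rcases a with _ | a <;> rcases b with _ | b <;> simp
    all_goals (symm; apply Nat.choose_eq_zero_of_lt; omega)
  | succ m ih =>
    intro a b
    rw [Finset.sum_range_succ]
    rcases b with _ | b
    · have h := ih a 0
      simp only [Nat.choose_zero_right, mul_one, add_zero] at h ⊢
      rw [h, Nat.choose_succ_succ (m + 1) a]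
      ring
    · have h1 := ih a b
      have h2 := ih a (b + 1)
      have : ∑ j ∈ Finset.range (m + 1), Nat.choose j a * Nat.choose (m + 1 - j) (b + 1)
          = ∑ j ∈ Finset.range (m + 1), Nat.choose j a * Nat.choose (m - j) b
          + ∑ j ∈ Finset.range (m + 1), Nat.choose j a * Nat.choose (m - j) (b + 1) := by
        rw [← Finset.sum_add_distrib]
        refine Finset.sum_congr rfl fun j hj => ?_
        have hj' : j ≤ m := by simpa [Nat.lt_succ_iff] using hj
        rw [Nat.succ_sub hj', Nat.choose_succ_succ]
        ring
      rw [this, h1, h2, ← add_assoc, Nat.choose_succ_succ (m + 1) (a + b + 1)]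
      simp

lemma aux_tele (j M k q : ℕ) (h : q < k) :
    ∑ l ∈ Finset.range (q + 1), Nat.choose j l * Nat.choose (M + 1) (k - l)
      = ∑ l ∈ Finset.range (q + 1), Nat.choose (j + 1) l * Nat.choose M (k - l)
        + Nat.choose j q * Nat.choose M (k - q - 1) := by
  induction q with
  | zero =>
    obtain ⟨k, rfl⟩ : ∃ t, k = t + 1 := ⟨k - 1, by omega⟩
    simp [Nat.choose_succ_succ]
    ring
  | succ q ih =>
    obtain ⟨t, rfl⟩ : ∃ t, k = q + 1 + t + 1 := ⟨k - q - 2, by omega⟩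
    rw [Finset.sum_range_succ, ih (by omega), Finset.sum_range_succ _ (q + 1)]
    have e1 : q + 1 + t + 1 - (q + 1) = t + 1 := by omega
    have e2 : q + 1 + t + 1 - q - 1 = t + 1 := by omega
    rw [e1, e2, Nat.choose_succ_succ M t, Nat.choose_succ_succ j q]
    simp only [Nat.succ_eq_add_one, Nat.add_sub_cancel]
    ring

lemma aux_mono (j M k q : ℕ) (h : q ≤ k) :
    ∑ l ∈ Finset.range (q + 1), Nat.choose (j + 1) l * Nat.choose M (k - l)
      ≤ ∑ l ∈ Finset.range (q + 1), Nat.choose j l * Nat.choose (M + 1) (k - l) := by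
  rcases h.lt_or_eq with h | rfl
  · rw [aux_tele j M k q h]; omega
  · rcases q with _ | q
    · simp
    · rw [Finset.sum_range_succ, Finset.sum_range_succ _ (q + 1), aux_tele j M (q + 1) q (by omega),
        Nat.choose_succ_succ j q]
      have e : q + 1 - q - 1 = 0 := by omega
      rw [e]
      simp
      omega

lemma aux_gamma_antitone (n s q : ℕ) (hq : 1 ≤ q) (hqs : q ≤ s) : Antitone (gammaR n s q) := by
  obtain ⟨q, rfl⟩ : ∃ t, q = t + 1 := ⟨q - 1, by omega⟩
  have key : ∀ i d : ℕ, i + d < n →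
      ∑ l ∈ Finset.range (q + 1), Nat.choose (i + d) l * Nat.choose (n - 1 - (i + d)) (s - l - 1)
      ≤ ∑ l ∈ Finset.range (q + 1), Nat.choose i l * Nat.choose (n - 1 - i) (s - l - 1) := by
    intro i d
    induction d with
    | zero => intro _; simp
    | succ d ih =>
      intro hd
      refine le_trans ?_ (ih (by omega))
      have h := aux_mono (i + d) (n - 1 - (i + (d + 1))) (s - 1) q (by omega)
      have e : n - 1 - (i + (d + 1)) + 1 = n - 1 - (i + d) := by omega
      rw [e] at h
      simpa only [Nat.sub_right_comm s 1, ← add_assoc] using h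
  intro i j hij
  unfold gammaR
  have hij' : i.val ≤ j.val := hij
  have h := key i.val (j.val - i.val) (by omega)
  rw [Nat.add_sub_cancel' hij'] at h
  have h' := (Nat.cast_le (α := ℝ)).2 h
  exact div_le_div_of_nonneg_right h' (by positivity)

lemma aux_gamma_sum (n s q : ℕ) (hq : 1 ≤ q) (hqs : q ≤ s) (hsn : s ≤ n) :
    ∑ j, gammaR n s q j = q := by
  unfold gammaR
  rw [← Finset.sum_div]
  have hpos : (0 : ℝ) < (Nat.choose n s : ℝ) := by exact_mod_cast Nat.choose_pos hsn
  rw [div_eq_iff hpos.ne']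
  norm_cast
  rw [Fin.sum_univ_eq_sum_range
    (fun j => ∑ l ∈ Finset.range q, Nat.choose j l * Nat.choose (n - 1 - j) (s - l - 1)) n,
    Finset.sum_comm]
  have : ∀ l ∈ Finset.range q,
      ∑ j ∈ Finset.range n, Nat.choose j l * Nat.choose (n - 1 - j) (s - l - 1)
        = Nat.choose n s := by
    intro l hl
    have hl' := Finset.mem_range.1 hl
    have h := aux_sum_choose (n - 1) l (s - l - 1)
    have e1 : n - 1 + 1 = n := by omega
    have e2 : l + (s - l - 1) + 1 = s := by omega
    rwa [e1, e2] at h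
  rw [Finset.sum_congr rfl this]
  simp

lemma aux_rearr {n : ℕ} (g a : Fin n → ℝ) (hg : Antitone g) (σ : Equiv.Perm (Fin n)) :
    ∑ j, g j * a (σ j) ≤ ∑ j, g j * sortDesc a j := by
  have hs : Antitone (sortDesc a) := by
    intro i j hij
    have := Tuple.monotone_sort (fun i => -a i) hij
    simpa [sortDesc] using this
  have hm : Monovary g (sortDesc a) := hg.monovary hs
  have h := hm.sum_mul_comp_perm_le_sum_mul (σ := σ.trans (Tuple.sort (fun i => -a i)).symm)
  simpa [sortDesc] using h

/-- proof of Theorem 2, part 2. If each `L_i` is `ρ`-weakly convex and `R` is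
convex, then the ordered loss `L_q(θ) = (1/q) ∑_j γ_j b_{(j)}(θ) + R(θ)` is `ρ`-weakly convex,
i.e. `θ ↦ L_q(θ) + (ρ/2)‖θ‖²` is convex. -/
theorem stmt_14 (n s q : ℕ) (hq : 1 ≤ q) (hqs : q ≤ s) (hsn : s ≤ n)
    (E : Type*) [NormedAddCommGroup E] [InnerProductSpace ℝ E]
    (ρ : ℝ) (hρ : 0 ≤ ρ)
    (L : Fin n → E → ℝ)
    (hL : ∀ i, ConvexOn ℝ Set.univ (fun θ => L i θ + ρ / 2 * ‖θ‖ ^ 2))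
    (R : E → ℝ) (hR : ConvexOn ℝ Set.univ R) :
    ConvexOn ℝ Set.univ (fun θ =>
      ((1 / (q : ℝ)) * ∑ j : Fin n, gammaR n s q j * sortDesc (fun i => L i θ) j + R θ)
        + ρ / 2 * ‖θ‖ ^ 2) := by
  have hg := aux_gamma_antitone n s q hq hqs
  have hsum := aux_gamma_sum n s q hq hqs hsn
  have hg0 : ∀ j, 0 ≤ gammaR n s q j := fun j => by unfold gammaR; positivity
  have hq0 : (0 : ℝ) < q := by exact_mod_cast hq
  have hF : ConvexOn ℝ Set.univ (fun θ =>
      ∑ j : Fin n, gammaR n s q j * sortDesc (fun i => L i θ) j + q * (ρ / 2 * ‖θ‖ ^ 2)) := by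
    refine ⟨convex_univ, fun x _ y _ a b ha hb hab => ?_⟩
    have ex : ∀ (σ : Equiv.Perm (Fin n)) (θ : E),
        ∑ j, gammaR n s q j * (L (σ j) θ + ρ / 2 * ‖θ‖ ^ 2)
          = ∑ j, gammaR n s q j * L (σ j) θ + q * (ρ / 2 * ‖θ‖ ^ 2) := by
      intro σ θ
      simp only [mul_add, Finset.sum_add_distrib]
      rw [← Finset.sum_mul, hsum]
    set z := a • x + b • y with hz
    set τ := Tuple.sort (fun i => -L i z) with hτ
    have hx := aux_rearr (gammaR n s q) (fun i => L i x) hg τ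
    have hy := aux_rearr (gammaR n s q) (fun i => L i y) hg τ
    have h1 : ∑ j, gammaR n s q j * (L (τ j) z + ρ / 2 * ‖z‖ ^ 2) ≤
        ∑ j, gammaR n s q j * (a * (L (τ j) x + ρ / 2 * ‖x‖ ^ 2)
          + b * (L (τ j) y + ρ / 2 * ‖y‖ ^ 2)) := by
      refine Finset.sum_le_sum fun j _ => mul_le_mul_of_nonneg_left ?_ (hg0 j)
      simpa using (hL (τ j)).2 (Set.mem_univ x) (Set.mem_univ y) ha hb hab
    have h2 : ∑ j, gammaR n s q j * (a * (L (τ j) x + ρ / 2 * ‖x‖ ^ 2)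
          + b * (L (τ j) y + ρ / 2 * ‖y‖ ^ 2))
        = a * ∑ j, gammaR n s q j * (L (τ j) x + ρ / 2 * ‖x‖ ^ 2)
          + b * ∑ j, gammaR n s q j * (L (τ j) y + ρ / 2 * ‖y‖ ^ 2) := by
      rw [Finset.mul_sum, Finset.mul_sum, ← Finset.sum_add_distrib]
      exact Finset.sum_congr rfl fun j _ => by ring
    rw [h2, ex, ex, ex] at h1
    have h3 := mul_le_mul_of_nonneg_left hx ha
    have h4 := mul_le_mul_of_nonneg_left hy hb
    simp only [smul_eq_mul]
    have h5 : ∑ j, gammaR n s q j * sortDesc (fun i => L i z) j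
        = ∑ j, gammaR n s q j * L (τ j) z := rfl
    rw [h5]
    linarith
  have h := (hF.smul (c := 1 / (q : ℝ)) (by positivity)).add hR
  refine h.congr fun θ _ => ?_
  simp only [Pi.add_apply, smul_eq_mul]
  field_simp
  ring
end

section
/- Let n, s, q be integers with 1 ≤ q ≤ s ≤ n, let E be a real inner product space, let L_1,…,L_n : E → ℝ and R : E → ℝ be convex, and fix θ ∈ E. For each subset S ⊆ {1,…,n} with |S| = s, let Q(S) be the set of q indices i ∈ S with the largest values L_i(θ), ties broken in favor of smaller index. Let g_i be a subgradient of L_i at θ for each i (i.e., L_i(θ') ≥ L_i(θ) + ⟨g_i, θ' − θ⟩ for all θ'), and let g_R be a subgradient of R at θ. Define L_q(θ') := (1/q) ∑_{j=1}^{n} γ_j · b_{(j)}(θ') + R(θ'), where b_{(1)}(θ') ≥ ⋯ ≥ b_{(n)}(θ') are the values L_1(θ'),…,L_n(θ') sorted in nonincreasing order. Then the vector g := C(n, s)^{-1} ∑_{S ⊆ {1,…,n}, |S| = s} ( (1/q) ∑_{i ∈ Q(S)} g_i + g_R ) is a subgradient of L_q at θ, i.e., L_q(θ') ≥ L_q(θ)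 + ⟨g, θ' − θ⟩ for all θ' ∈ E. (Theorem 1: the expected ordered-SGD update direction is a subgradient of the ordered empirical loss L_q.) -/
open RealInnerProductSpace

lemma exch_aux {n : ℕ} (a : Fin n → ℝ) (S T P : Finset (Fin n)) (hP : P ⊆ S)
    (hc : P.card = T.card) (h : ∀ i ∈ T, ∀ k ∈ S \ T, a k ≤ a i) :
    ∑ i ∈ P, a i ≤ ∑ i ∈ T, a i := by
  classical
  have hc' : (P \ T).card = (T \ P).card := by
    have h1 := Finset.card_sdiff_add_card_inter P T
    have h2 := Finset.card_sdiff_add_card_inter T P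
    rw [Finset.inter_comm] at h2
    omega
  have e1 := Finset.sum_inter_add_sum_sdiff P T a
  have e2 := Finset.sum_inter_add_sum_sdiff T P a
  rw [Finset.inter_comm] at e2
  have key : ∑ i ∈ P \ T, a i ≤ ∑ i ∈ T \ P, a i := by
    rcases (T \ P).eq_empty_or_nonempty with h0 | hne
    · rw [h0, Finset.card_empty, Finset.card_eq_zero] at hc'
      rw [h0, hc']
    · obtain ⟨m, hm, hmin⟩ := Finset.exists_min_image (T \ P) a hne
      calc ∑ i ∈ P \ T, a i ≤ (P \ T).card • a m := by
            apply Finset.sum_le_card_nsmul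
            intro x hx
            rw [Finset.mem_sdiff] at hx hm
            exact h m hm.1 x (Finset.mem_sdiff.2 ⟨hP hx.1, hx.2⟩)
        _ = (T \ P).card • a m := by rw [hc']
        _ ≤ _ := Finset.card_nsmul_le_sum _ _ _ hmin
  linarith

def topAux {n : ℕ} (q : ℕ) (S : Finset (Fin n)) : Finset (Fin n) :=
  S.filter (fun j => (S.filter (· < j)).card < q)

lemma topAux_card {n : ℕ} (q : ℕ) (S : Finset (Fin n)) :
    (topAux q S).card = min q S.card := by
  classical
  induction S using Finset.induction_on_max with
  | empty => simp [topAux]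
  | insert m S hm ih =>
    have hmS : m ∉ S := fun h => lt_irrefl _ (hm m h)
    have e1 : (insert m S).filter (· < m) = S := by
      ext x; simp only [Finset.mem_filter, Finset.mem_insert]
      constructor
      · rintro ⟨rfl | h, h2⟩
        · exact absurd h2 (lt_irrefl _)
        · exact h
      · exact fun h => ⟨Or.inr h, hm x h⟩
    have e2 : ∀ j ∈ S, (insert m S).filter (· < j) = S.filter (· < j) := by
      intro j hj
      rw [Finset.filter_insert, if_neg (not_lt.2 (hm j hj).le)]
    have e3 : topAux q (insert m S) = if S.card < q then insert m (topAux q S) else topAux q S := by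
      unfold topAux
      rw [Finset.filter_insert, e1]
      have : S.filter (fun j => ((insert m S).filter (· < j)).card < q)
          = S.filter (fun j => (S.filter (· < j)).card < q) :=
        Finset.filter_congr (fun j hj => by rw [e2 j hj])
      rw [this]
    rw [e3, Finset.card_insert_of_notMem hmS]
    split_ifs with h
    · have hmT : m ∉ topAux q S := fun hh => hmS (Finset.mem_filter.1 hh).1
      rw [Finset.card_insert_of_notMem hmT, ih]; omega
    · rw [ih]; omega

lemma count_one {n s : ℕ} (j : Fin n) (l : ℕ) (hl : l < s) :
    ((Finset.powersetCard s (Finset.univ : Finset (Fin n))).filter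
      (fun S => j ∈ S ∧ (S.filter (· < j)).card = l)).card
      = Nat.choose j.val l * Nat.choose (n - 1 - j.val) (s - l - 1) := by
  classical
  have hs : ∀ S : Finset (Fin n), j ∈ S →
      S.card = (S.filter (· < j)).card + (S.filter (j < ·)).card + 1 := by
    intro S hj
    have : S = insert j (S.filter (· < j) ∪ S.filter (j < ·)) := by
      ext x
      simp only [Finset.mem_insert, Finset.mem_union, Finset.mem_filter]
      rcases lt_trichotomy x j with h | h | h
      · simp [h, h.ne, h.not_gt]
      · simp [h, hj]
      · simp [h, h.ne', h.not_gt]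
    conv_lhs => rw [this]
    rw [Finset.card_insert_of_notMem (by simp), Finset.card_union_of_disjoint]
    rw [Finset.disjoint_left]
    intro x hx hy
    exact lt_asymm (Finset.mem_filter.1 hx).2 (Finset.mem_filter.1 hy).2
  have hA : ((Finset.Iio j).powersetCard l ×ˢ (Finset.Ioi j).powersetCard (s - l - 1)).card
      = Nat.choose j.val l * Nat.choose (n - 1 - j.val) (s - l - 1) := by
    rw [Finset.card_product, Finset.card_powersetCard, Finset.card_powersetCard, Fin.card_Iio,
      Fin.card_Ioi]
  rw [← hA]
  have f1 : ∀ A B : Finset (Fin n), A ⊆ Finset.Iio j → B ⊆ Finset.Ioi j →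
      (insert j (A ∪ B)).filter (· < j) = A := by
    intro A B h1 h2
    ext x
    have h1 := @h1 x
    have h2 := @h2 x
    simp only [Finset.mem_Iio, Finset.mem_Ioi, Finset.mem_filter, Finset.mem_insert,
      Finset.mem_union] at *
    grind
  have f2 : ∀ A B : Finset (Fin n), A ⊆ Finset.Iio j → B ⊆ Finset.Ioi j →
      (insert j (A ∪ B)).filter (j < ·) = B := by
    intro A B h1 h2
    ext x
    have h1 := @h1 x
    have h2 := @h2 x
    simp only [Finset.mem_Iio, Finset.mem_Ioi, Finset.mem_filter, Finset.mem_insert,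
      Finset.mem_union] at *
    grind
  refine Finset.card_bij' (fun S _ => (S.filter (· < j), S.filter (j < ·)))
    (fun p _ => insert j (p.1 ∪ p.2)) ?_ ?_ ?_ ?_
  · intro S hS
    simp only [Finset.mem_filter, Finset.mem_powersetCard, Finset.subset_univ, true_and] at hS
    have := hs S hS.2.1
    simp only [Finset.mem_product, Finset.mem_powersetCard]
    refine ⟨⟨?_, hS.2.2⟩, ?_, by omega⟩
    · intro x hx; simpa using (Finset.mem_filter.1 hx).2
    · intro x hx; simpa using (Finset.mem_filter.1 hx).2
  · intro p hp
    simp only [Finset.mem_product, Finset.mem_powersetCard] at hp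
    have h1 := f1 p.1 p.2 hp.1.1 hp.2.1
    have h2 := f2 p.1 p.2 hp.1.1 hp.2.1
    have h3 := hs (insert j (p.1 ∪ p.2)) (Finset.mem_insert_self _ _)
    rw [h1, h2] at h3
    simp only [Finset.mem_filter, Finset.mem_powersetCard, Finset.subset_univ, true_and]
    refine ⟨by omega, Finset.mem_insert_self _ _, by rw [h1]; exact hp.1.2⟩
  · intro S hS
    simp only [Finset.mem_filter, Finset.mem_powersetCard, Finset.subset_univ, true_and] at hS
    ext x
    simp only [Finset.mem_insert, Finset.mem_union, Finset.mem_filter]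
    rcases lt_trichotomy x j with h | h | h
    · simp [h, h.ne, h.not_gt]
    · simp [h, hS.2.1]
    · simp [h, h.ne', h.not_gt]
  · intro p hp
    simp only [Finset.mem_product, Finset.mem_powersetCard] at hp
    exact Prod.ext (f1 p.1 p.2 hp.1.1 hp.2.1) (f2 p.1 p.2 hp.1.1 hp.2.1)

lemma count_all {n s q : ℕ} (hqs : q ≤ s) (j : Fin n) :
    ((Finset.powersetCard s (Finset.univ : Finset (Fin n))).filter
      (fun S => j ∈ topAux q S)).card
      = ∑ l ∈ Finset.range q, Nat.choose j.val l * Nat.choose (n - 1 - j.val) (s - l - 1) := by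
  classical
  rw [Finset.card_eq_sum_card_fiberwise (f := fun S => (S.filter (· < j)).card)
    (t := Finset.range q)]
  · refine Finset.sum_congr rfl fun l hl => ?_
    rw [Finset.mem_range] at hl
    rw [← count_one j l (by omega), Finset.filter_filter]
    congr 1
    refine Finset.filter_congr fun S _ => ?_
    simp only [topAux, Finset.mem_filter]
    constructor
    · rintro ⟨⟨h1, h2⟩, h3⟩; exact ⟨h1, h3⟩
    · rintro ⟨h1, h3⟩; exact ⟨⟨h1, by omega⟩, h3⟩
  · intro S hS
    simp only [topAux, Finset.coe_filter, Set.mem_ofPred_eq, Finset.mem_filter] at hS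
    simpa using hS.2.2

lemma sum_top {n s q : ℕ} (hqs : q ≤ s) (hsn : s ≤ n) (b : Fin n → ℝ) :
    ∑ S ∈ Finset.powersetCard s (Finset.univ : Finset (Fin n)), ∑ j ∈ topAux q S, b j
      = (Nat.choose n s : ℝ) * ∑ j : Fin n, gammaR n s q j * b j := by
  classical
  have hC : (Nat.choose n s : ℝ) ≠ 0 := by
    exact_mod_cast (Nat.choose_pos hsn).ne'
  have : ∀ S : Finset (Fin n), ∑ j ∈ topAux q S, b j
      = ∑ j : Fin n, if j ∈ topAux q S then b j else 0 := by
    intro S; simp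
  simp_rw [this]
  rw [Finset.sum_comm, Finset.mul_sum]
  refine Finset.sum_congr rfl fun j _ => ?_
  rw [← Finset.sum_filter, Finset.sum_const, count_all hqs, gammaR, nsmul_eq_mul]
  field_simp

/-- comparison for a vector `a`, in the sorted order -/
lemma sum_sorted {n s q : ℕ} (hqs : q ≤ s) (hsn : s ≤ n) (a : Fin n → ℝ) :
    ∃ T : Finset (Fin n) → Finset (Fin n),
      (∀ S, S.card = s → T S ⊆ S ∧ (T S).card = q ∧ ∀ i ∈ T S, ∀ k ∈ S \ T S, a k ≤ a i) ∧
      ∑ S ∈ Finset.powersetCard s (Finset.univ : Finset (Fin n)), ∑ i ∈ T S, a i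
      = (Nat.choose n s : ℝ) * ∑ j : Fin n, gammaR n s q j * sortDesc a j := by
  classical
  set σ := Tuple.sort (fun i => -a i) with hσ
  have hmono : ∀ j k, j ≤ k → a (σ k) ≤ a (σ j) := by
    intro j k h
    have := Tuple.monotone_sort (fun i => -a i) h
    simp only [Function.comp] at this
    linarith
  refine ⟨fun S => (topAux q (S.map σ.symm.toEmbedding)).map σ.toEmbedding, ?_, ?_⟩
  · intro S hS
    refine ⟨?_, ?_, ?_⟩
    · intro x hx
      simp only [topAux, Finset.mem_map_equiv, Finset.mem_filter] at hx
      simpa using hx.1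
    · rw [Finset.card_map, topAux_card, Finset.card_map]; omega
    · intro i hi k hk
      rw [Finset.mem_sdiff, Finset.mem_map_equiv] at hk
      rw [Finset.mem_map_equiv] at hi
      have hk1 : σ.symm k ∈ S.map σ.symm.toEmbedding := by simpa using hk.1
      have := hmono (σ.symm i) (σ.symm k) (by
        by_contra hlt
        rw [not_le] at hlt
        apply hk.2
        simp only [topAux, Finset.mem_filter] at hi ⊢
        refine ⟨hk1, lt_of_le_of_lt (Finset.card_le_card ?_) hi.2⟩
        intro x hx
        rw [Finset.mem_filter] at hx ⊢
        exact ⟨hx.1, hx.2.trans hlt⟩)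
      simpa using this
  · rw [← sum_top hqs hsn]
    refine Finset.sum_equiv (Equiv.finsetCongr σ.symm) ?_ ?_
    · intro S; simp [Finset.mem_powersetCard]
    · intro S _
      simp [Finset.sum_map, sortDesc, ← hσ, Equiv.finsetCongr_apply]

/-- Theorem 1. Let `Q S` be the set of the `q` indices `i ∈ S` with largest
loss `L i θ` (ties broken toward smaller index), let `g i` be a subgradient of `L i` at `θ` and
`gR` a subgradient of `R` at `θ`. Then
`g = C(n,s)⁻¹ ∑_{|S|=s} ((1/q) ∑_{i ∈ Q S} g i + gR)` is a subgradient at `θ` of the ordered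
empirical loss `L_q(θ') = (1/q) ∑_j γ_j b_{(j)}(θ') + R(θ')`. -/
theorem stmt_15 (n s q : ℕ) (hq : 1 ≤ q) (hqs : q ≤ s) (hsn : s ≤ n)
    (E : Type*) [NormedAddCommGroup E] [InnerProductSpace ℝ E]
    (L : Fin n → E → ℝ) (hL : ∀ i, ConvexOn ℝ Set.univ (L i))
    (R : E → ℝ) (hR : ConvexOn ℝ Set.univ R)
    (θ : E)
    (Q : Finset (Fin n) → Finset (Fin n))
    (hQ : ∀ S : Finset (Fin n), S.card = s →
      Q S ⊆ S ∧ (Q S).card = q ∧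
        ∀ i ∈ Q S, ∀ k ∈ S \ Q S, L k θ < L i θ ∨ (L k θ = L i θ ∧ i < k))
    (g : Fin n → E) (hg : ∀ i, ∀ θ' : E, L i θ + ⟪g i, θ' - θ⟫ ≤ L i θ')
    (gR : E) (hgR : ∀ θ' : E, R θ + ⟪gR, θ' - θ⟫ ≤ R θ') :
    ∀ θ' : E,
      ((1 / (q : ℝ)) * ∑ j : Fin n, gammaR n s q j * sortDesc (fun i => L i θ) j + R θ)
          + ⟪(Nat.choose n s : ℝ)⁻¹ •
              ∑ S ∈ Finset.powersetCard s (Finset.univ : Finset (Fin n)),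
                ((1 / (q : ℝ)) • ∑ i ∈ Q S, g i + gR), θ' - θ⟫
        ≤ (1 / (q : ℝ)) * ∑ j : Fin n, gammaR n s q j * sortDesc (fun i => L i θ') j + R θ' := by
  classical
  intro θ'
  have hC : (0:ℝ) < (Nat.choose n s : ℝ) := by exact_mod_cast Nat.choose_pos hsn
  have hq0 : (0:ℝ) < (q:ℝ) := by exact_mod_cast hq
  obtain ⟨T, hT, eT⟩ := sum_sorted (q := q) hqs hsn (fun i => L i θ)
  obtain ⟨T', hT', eT'⟩ := sum_sorted (q := q) hqs hsn (fun i => L i θ')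
  set A := ∑ j : Fin n, gammaR n s q j * sortDesc (fun i => L i θ) j
  set B := ∑ j : Fin n, gammaR n s q j * sortDesc (fun i => L i θ') j
  set D := ∑ S ∈ Finset.powersetCard s (Finset.univ : Finset (Fin n)),
    ∑ i ∈ Q S, ⟪g i, θ' - θ⟫ with hD
  have hin : ⟪(Nat.choose n s : ℝ)⁻¹ •
              ∑ S ∈ Finset.powersetCard s (Finset.univ : Finset (Fin n)),
                ((1 / (q : ℝ)) • ∑ i ∈ Q S, g i + gR), θ' - θ⟫
      = (1 / (q:ℝ)) * ((Nat.choose n s : ℝ)⁻¹ * D) + ⟪gR, θ' - θ⟫ := by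
    rw [real_inner_smul_left, sum_inner]
    simp only [inner_add_left, real_inner_smul_left, sum_inner]
    rw [Finset.sum_add_distrib, ← Finset.mul_sum, Finset.sum_const, Finset.card_powersetCard,
      Finset.card_univ, Fintype.card_fin, nsmul_eq_mul]
    rw [← hD]
    field_simp
  have hmain : (Nat.choose n s : ℝ) * A + D ≤ (Nat.choose n s : ℝ) * B := by
    rw [← eT, ← eT', hD, ← Finset.sum_add_distrib]
    refine Finset.sum_le_sum fun S hS => ?_
    have hS := (Finset.mem_powersetCard.1 hS).2
    obtain ⟨q1, q2, q3⟩ := hQ S hS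
    obtain ⟨t1, t2, t3⟩ := hT S hS
    obtain ⟨u1, u2, u3⟩ := hT' S hS
    have h1 := exch_aux (fun i => L i θ) S (Q S) (T S) t1 (by omega) (fun i hi k hk => by
      rcases q3 i hi k hk with h | h
      · exact h.le
      · exact h.1.le)
    have h2 := exch_aux (fun i => L i θ') S (T' S) (Q S) q1 (by omega) u3
    have h3 : ∑ i ∈ Q S, L i θ + ∑ i ∈ Q S, ⟪g i, θ' - θ⟫ ≤ ∑ i ∈ Q S, L i θ' := by
      rw [← Finset.sum_add_distrib]
      exact Finset.sum_le_sum fun i _ => hg i θ'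
    linarith
  have hm2 : A + (Nat.choose n s : ℝ)⁻¹ * D ≤ B := by
    have := mul_le_mul_of_nonneg_left hmain (inv_pos.2 hC).le
    rw [mul_add, inv_mul_cancel_left₀ hC.ne', inv_mul_cancel_left₀ hC.ne'] at this
    exact this
  have hm3 := mul_le_mul_of_nonneg_left hm2 (one_div_pos.2 hq0).le
  rw [mul_add] at hm3
  rw [hin]
  linarith [hgR θ']
end

section
/- Let n, s, q be integers with 1 ≤ q ≤ s ≤ n, let E be a real inner product space, let L_1,…,L_n : E → ℝ be convex and G₁-Lipschitz, and let R : E → ℝ be convex and G₂-Lipschitz. Define L_q(θ) := (1/q) ∑_{j=1}^{n} γ_j · b_{(j)}(θ) + R(θ), where b_{(1)}(θ) ≥ ⋯ ≥ b_{(n)}(θ) are the values L_1(θ),…,L_n(θ) sorted in nonincreasing order. Let θ* be a minimizer of L_q over E, let T ≥ 0 be an integer, let η_0,…,η_T > 0, and fix an initial point θ⁰ ∈ E. Let 𝒮 := {S ⊆ {1,…,n} : |S| = s}. For each ω = (S_0,…,S_T) ∈ 𝒮^{T+1}, define recursively θ_ω⁰ := θ⁰ and θ_ω^{t+1} := θ_ω^t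 − η_t g_ω^t, where g_ω^t is a subgradient at θ_ω^t of the convex function θ ↦ (1/q) ∑_{i ∈ Q(S_t, θ_ω^t)} L_i(θ) + R(θ), Q(S, θ) denotes the set of q indices i ∈ S with the largest values L_i(θ) (ties broken in favor of smaller index), and the choice g_ω^t depends on ω only through (S_0,…,S_t). Then min_{0 ≤ t ≤ T} [ |𝒮|^{-(T+1)} ∑_{ω ∈ 𝒮^{T+1}} ( L_q(θ_ω^t) − L_q(θ*) ) ] ≤ ( 2(G₁² + G₂²) ∑_{t=0}^{T} η_t² + ‖θ* − θ⁰‖² ) / ( 2 ∑_{t=0}^{T} η_t ). (Theorem 2, part 1: convergence of ordered SGD in the convex setting, with the expectation written as a finite average over all mini-batch sequences.) -/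
open RealInnerProductSpace

open Finset in
lemma aux_count (n s q : ℕ) (hqs : q ≤ s) (j : Fin n) :
    ((Finset.powersetCard s (Finset.univ : Finset (Fin n))).filter
      (fun P => j ∈ P ∧ (P.filter (· < j)).card < q)).card
    = ∑ l ∈ Finset.range q, Nat.choose j.val l * Nat.choose (n - 1 - j.val) (s - l - 1) := by
  classical
  rw [Finset.card_eq_sum_card_fiberwise (f := fun P => (P.filter (· < j)).card) (t := Finset.range q)]
  · refine Finset.sum_congr rfl fun l hl => ?_
    have hl' : l < q := Finset.mem_range.mp hl
    have h1 : (Finset.powersetCard l (Finset.Iio j) ×ˢ Finset.powersetCard (s-l-1) (Finset.Ioi j)).card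
      = Nat.choose j.val l * Nat.choose (n - 1 - j.val) (s - l - 1) := by
      rw [Finset.card_product, Finset.card_powersetCard, Finset.card_powersetCard, Fin.card_Iio, Fin.card_Ioi]
    rw [← h1]
    refine Finset.card_nbij' (fun P => (P.filter (· < j), P.filter (j < ·)))
      (fun AB => insert j (AB.1 ∪ AB.2)) ?_ ?_ ?_ ?_
    · intro P hP
      simp only [Finset.coe_filter, Finset.mem_filter, Finset.mem_powersetCard, Set.mem_ofPred_eq] at hP
      obtain ⟨⟨⟨-, hc⟩, hj, -⟩, hl2⟩ := hP
      have e : P = insert j (P.filter (· < j) ∪ P.filter (j < ·)) := by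
        ext x; simp only [Finset.mem_insert, Finset.mem_union, Finset.mem_filter]
        rcases lt_trichotomy x j with h | h | h
        · simpa [h, h.ne] using fun _ h2 => absurd h2 (lt_asymm h)
        · subst h; simp [hj]
        · simpa [h, h.ne'] using fun _ h2 => absurd h2 (lt_asymm h)
      have hd : Disjoint (P.filter (· < j)) (P.filter (j < ·)) := by
        rw [Finset.disjoint_left]; intro x hx hx'
        simp only [Finset.mem_filter] at hx hx'
        exact lt_asymm hx.2 hx'.2
      have hc2 := congrArg Finset.card e
      rw [Finset.card_insert_of_notMem (by simp), Finset.card_union_of_disjoint hd] at hc2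
      simp only [Finset.coe_product, Set.mem_prod, Finset.mem_coe, Finset.mem_powersetCard]
      refine ⟨⟨fun x hx => ?_, hl2⟩, fun x hx => ?_, by omega⟩
      · simp only [Finset.mem_filter] at hx; simpa using hx.2
      · simp only [Finset.mem_filter] at hx; simpa using hx.2
    · rintro ⟨A, B⟩ hAB
      simp only [Finset.coe_product, Set.mem_prod, Finset.mem_coe, Finset.mem_powersetCard] at hAB
      obtain ⟨⟨hA, hAc⟩, hB, hBc⟩ := hAB
      have hA' : ∀ x ∈ A, x < j := fun x hx => by simpa using hA hx
      have hB' : ∀ x ∈ B, j < x := fun x hx => by simpa using hB hx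
      have hd : Disjoint A B := by
        rw [Finset.disjoint_left]; intro x hx hx'
        exact lt_asymm (hA' x hx) (hB' x hx')
      have e : (insert j (A ∪ B)).filter (· < j) = A := by
        ext x; simp only [Finset.mem_insert, Finset.mem_union, Finset.mem_filter]
        constructor
        · rintro ⟨h | h | h, h2⟩
          · exact absurd h h2.ne
          · exact h
          · exact absurd (hB' x h) (lt_asymm h2)
        · intro h; exact ⟨Or.inr (Or.inl h), hA' x h⟩
      have hnot : j ∉ A ∪ B := by
        rw [Finset.mem_union]; rintro (h | h)
        · exact lt_irrefl _ (hA' _ h)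
        · exact lt_irrefl _ (hB' _ h)
      simp only [Finset.coe_filter, Finset.mem_filter, Finset.mem_powersetCard, Set.mem_ofPred_eq]
      rw [e, Finset.card_insert_of_notMem hnot, Finset.card_union_of_disjoint hd]
      exact ⟨⟨⟨Finset.subset_univ _, by omega⟩, Finset.mem_insert_self _ _, by omega⟩, hAc⟩
    · intro P hP
      simp only [Finset.coe_filter, Finset.mem_filter, Finset.mem_powersetCard, Set.mem_ofPred_eq] at hP
      obtain ⟨⟨⟨-, hc⟩, hj, -⟩, hl2⟩ := hP
      ext x; simp only [Finset.mem_insert, Finset.mem_union, Finset.mem_filter]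
      rcases lt_trichotomy x j with h | h | h
      · simpa [h, h.ne] using fun _ h2 => absurd h2 (lt_asymm h)
      · subst h; simp [hj]
      · simpa [h, h.ne'] using fun _ h2 => absurd h2 (lt_asymm h)
    · rintro ⟨A, B⟩ hAB
      simp only [Finset.coe_product, Set.mem_prod, Finset.mem_coe, Finset.mem_powersetCard] at hAB
      obtain ⟨⟨hA, hAc⟩, hB, hBc⟩ := hAB
      have hA' : ∀ x ∈ A, x < j := fun x hx => by simpa using hA hx
      have hB' : ∀ x ∈ B, j < x := fun x hx => by simpa using hB hx
      refine Prod.ext ?_ ?_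
      · ext x; simp only [Finset.mem_insert, Finset.mem_union, Finset.mem_filter]
        constructor
        · rintro ⟨h | h | h, h2⟩
          · exact absurd h h2.ne
          · exact h
          · exact absurd (hB' x h) (lt_asymm h2)
        · intro h; exact ⟨Or.inr (Or.inl h), hA' x h⟩
      · ext x; simp only [Finset.mem_insert, Finset.mem_union, Finset.mem_filter]
        constructor
        · rintro ⟨h | h | h, h2⟩
          · exact absurd h h2.ne'
          · exact absurd (hA' x h) (lt_asymm h2)
          · exact h
        · intro h; exact ⟨Or.inr (Or.inr h), hB' x h⟩
  · intro P hP
    simp only [Finset.coe_filter, Set.mem_ofPred_eq] at hP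
    simpa using hP.2.2

/-- membership of the selected set in terms of ranks -/
lemma aux_mem {n q : ℕ} (a : Fin n → ℝ) (S Q : Finset (Fin n))
    (hQS : Q ⊆ S) (hQc : Q.card = q)
    (hQ : ∀ i ∈ Q, ∀ k ∈ S \ Q, a k < a i ∨ (a k = a i ∧ i < k)) (j : Fin n) :
    Tuple.sort (fun i => -a i) j ∈ Q ↔
      (j ∈ S.map (Tuple.sort (fun i => -a i)).symm.toEmbedding ∧
        ((S.map (Tuple.sort (fun i => -a i)).symm.toEmbedding).filter (· < j)).card < q) := by
  classical
  obtain ⟨hmono, hst⟩ := (Tuple.eq_sort_iff (f := fun i => -a i)).mp rfl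
  set π := Tuple.sort (fun i => -a i) with hπ
  have hmem : ∀ k, k ∈ S.map π.symm.toEmbedding ↔ π k ∈ S := by
    intro k
    simp
  have hlt : ∀ k k', π k ∈ Q → π k' ∈ S → π k' ∉ Q → k < k' := by
    intro k k' h1 h2 h3
    by_contra hcon
    rcases lt_or_eq_of_le (not_lt.mp hcon) with h | h
    · have hm : -a (π k') ≤ -a (π k) := hmono h.le
      rcases hQ _ h1 _ (Finset.mem_sdiff.mpr ⟨h2, h3⟩) with h4 | ⟨h4, h5⟩
      · linarith
      · exact lt_asymm h5 (hst _ _ h (by simp [h4]))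
    · subst h; exact h3 h1
  have hQm : (Q.map π.symm.toEmbedding).card = q := by simp [hQc]
  have hmemQ : ∀ k, k ∈ Q.map π.symm.toEmbedding ↔ π k ∈ Q := by
    intro k
    simp
  constructor
  · intro hj
    refine ⟨(hmem j).2 (hQS hj), ?_⟩
    rw [← hQm]
    apply Finset.card_lt_card
    rw [Finset.ssubset_iff_of_subset]
    · exact ⟨j, (hmemQ j).2 hj, by simp⟩
    · intro k hk
      rw [Finset.mem_filter, hmem] at hk
      rw [hmemQ]
      by_contra hcon
      exact lt_asymm hk.2 (hlt _ _ hj hk.1 hcon)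
  · rintro ⟨hj, hc⟩
    by_contra hcon
    rw [hmem] at hj
    have : (Q.map π.symm.toEmbedding) ⊆ (S.map π.symm.toEmbedding).filter (· < j) := by
      intro k hk
      rw [hmemQ] at hk
      rw [Finset.mem_filter, hmem]
      exact ⟨hQS hk, hlt _ _ hk hj hcon⟩
    have := Finset.card_le_card this
    omega

lemma aux_avg {n s q : ℕ} (hqs : q ≤ s) (hsn : s ≤ n) (a : Fin n → ℝ)
    (Q : Finset (Fin n) → Finset (Fin n))
    (hQ : ∀ S : Finset (Fin n), S.card = s → Q S ⊆ S ∧ (Q S).card = q ∧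
      ∀ i ∈ Q S, ∀ k ∈ S \ Q S, a k < a i ∨ (a k = a i ∧ i < k)) :
    ∑ S : {S : Finset (Fin n) // S.card = s}, ∑ i ∈ Q S.1, a i
      = (Nat.choose n s : ℝ) * ∑ j : Fin n, gammaR n s q j * sortDesc a j := by
  classical
  have hN : (Nat.choose n s : ℝ) ≠ 0 := by
    exact_mod_cast (Nat.choose_pos hsn).ne'
  set π := Tuple.sort (fun i => -a i) with hπ
  have h0 : ∑ S : {S : Finset (Fin n) // S.card = s}, ∑ i ∈ Q S.1, a i
      = ∑ S ∈ Finset.powersetCard s (Finset.univ : Finset (Fin n)), ∑ i ∈ Q S, a i := by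
    rw [← Finset.sum_subtype (Finset.powersetCard s (Finset.univ : Finset (Fin n)))
      (p := fun S => S.card = s) (by intro x; simp [Finset.mem_powersetCard]) (fun S => ∑ i ∈ Q S, a i)]
  have h1 : ∀ S ∈ Finset.powersetCard s (Finset.univ : Finset (Fin n)),
      ∑ i ∈ Q S, a i = ∑ j : Fin n, if (j ∈ S.map π.symm.toEmbedding ∧
        ((S.map π.symm.toEmbedding).filter (· < j)).card < q) then a (π j) else 0 := by
    intro S hS
    obtain ⟨h1, h2, h3⟩ := hQ S (Finset.mem_powersetCard.mp hS).2
    calc ∑ i ∈ Q S, a i = ∑ i, if i ∈ Q S then a i else 0 := by simp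
      _ = ∑ j, if π j ∈ Q S then a (π j) else 0 := (Equiv.sum_comp π _).symm
      _ = _ := by
        refine Finset.sum_congr rfl fun j _ => ?_
        simp only [hπ, aux_mem a S (Q S) h1 h2 h3 j]
  rw [h0, Finset.sum_congr rfl h1, Finset.sum_comm, Finset.mul_sum]
  refine Finset.sum_congr rfl fun j _ => ?_
  have h2 : ∑ S ∈ Finset.powersetCard s (Finset.univ : Finset (Fin n)),
      (if (j ∈ S.map π.symm.toEmbedding ∧
        ((S.map π.symm.toEmbedding).filter (· < j)).card < q) then a (π j) else 0)
      = ∑ P ∈ Finset.powersetCard s (Finset.univ : Finset (Fin n)),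
        (if (j ∈ P ∧ (P.filter (· < j)).card < q) then a (π j) else 0) := by
    refine Finset.sum_nbij' (fun S => S.map π.symm.toEmbedding) (fun P => P.map π.toEmbedding)
      ?_ ?_ ?_ ?_ ?_
    · intro S hS; simpa [Finset.mem_powersetCard] using hS
    · intro S hS; simpa [Finset.mem_powersetCard] using hS
    · intro S _; ext x; simp
    · intro S _; ext x; simp
    · intro S _; rfl
  rw [h2, ← Finset.sum_filter, Finset.sum_const, aux_count n s q hqs j, nsmul_eq_mul]
  unfold gammaR sortDesc
  rw [← mul_assoc, mul_div_cancel₀ _ hN]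

lemma aux_top {n q : ℕ} (a : Fin n → ℝ) (S Q P : Finset (Fin n))
    (hQc : Q.card = q)
    (hQ : ∀ i ∈ Q, ∀ k ∈ S \ Q, a k < a i ∨ (a k = a i ∧ i < k))
    (hPS : P ⊆ S) (hPc : P.card = q) : ∑ i ∈ P, a i ≤ ∑ i ∈ Q, a i := by
  classical
  have e1 := Finset.sum_inter_add_sum_sdiff P Q a
  have e2 := Finset.sum_inter_add_sum_sdiff Q P a
  rw [Finset.inter_comm Q P] at e2
  have hc : (P \ Q).card = (Q \ P).card := by
    have h1 := Finset.card_sdiff_add_card_inter P Q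
    have h2 := Finset.card_sdiff_add_card_inter Q P
    rw [Finset.inter_comm] at h2
    omega
  have hle : ∀ i ∈ Q \ P, ∀ k ∈ P \ Q, a k ≤ a i := by
    intro i hi k hk
    rw [Finset.mem_sdiff] at hi hk
    rcases hQ i hi.1 k (Finset.mem_sdiff.mpr ⟨hPS hk.1, hk.2⟩) with h | h
    · exact h.le
    · exact h.1.le
  have e : ((P \ Q : Finset (Fin n)) : Type) ≃ ((Q \ P : Finset (Fin n)) : Type) := Finset.equivOfCardEq hc
  have : ∑ i ∈ P \ Q, a i ≤ ∑ i ∈ Q \ P, a i := by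
    rw [← Finset.sum_coe_sort (P \ Q), ← Finset.sum_coe_sort (Q \ P), ← Equiv.sum_comp e]
    exact Finset.sum_le_sum fun i _ => hle _ (e i).2 _ i.2
  linarith

lemma aux_update {ι β : Type*} [Fintype ι] [DecidableEq ι] [Fintype β] (t : ι)
    (H : (ι → β) → ℝ) :
    ∑ ω : ι → β, ∑ S : β, H (Function.update ω t S) = (Fintype.card β : ℝ) * ∑ ω, H ω := by
  have hinv : Function.Involutive
      (fun p : (ι → β) × β => (Function.update p.1 t p.2, p.1 t)) := by
    rintro ⟨ω, S⟩
    simp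
  rw [← Fintype.sum_prod_type' (fun ω S => H (Function.update ω t S)),
    ← Equiv.sum_comp hinv.toPerm]
  simp [Function.Involutive.toPerm, Fintype.sum_prod_type, Finset.mul_sum]

lemma aux_sq {E : Type*} [NormedAddCommGroup E] [InnerProductSpace ℝ E] (G₁ G₂ : ℝ) (g : E)
    (h : ⟪g, g⟫ ≤ (G₁ + G₂) * ‖g‖) : ‖g‖ ^ 2 ≤ 2 * (G₁ ^ 2 + G₂ ^ 2) := by
  rw [real_inner_self_eq_norm_sq] at h
  rcases (norm_nonneg g).eq_or_lt with h0 | h0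
  · rw [← h0]; nlinarith [sq_nonneg G₁, sq_nonneg G₂]
  · have : ‖g‖ ≤ G₁ + G₂ := by nlinarith
    nlinarith [sq_nonneg (G₁ - G₂)]

/-- Theorem 2, part 1: convergence of ordered SGD in the convex setting.
Each `ω = (S_0,…,S_T)` is a sequence of mini-batches of size `s`; `θfn ω` is the ordered-SGD
iterate sequence started at `θ0` with steps `θ^{t+1} = θ^t − η_t g_ω^t`, where `g_ω^t` is a
subgradient at `θ_ω^t` of `θ ↦ (1/q) ∑_{i ∈ Q(S_t, θ_ω^t)} L i θ + R θ` and depends on `ω` only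
through `(S_0,…,S_t)`. The minimum over `t ≤ T` of the averaged optimality gap satisfies the
stated sublinear bound. -/
theorem stmt_16 (n s q : ℕ) (hq : 1 ≤ q) (hqs : q ≤ s) (hsn : s ≤ n)
    (E : Type*) [NormedAddCommGroup E] [InnerProductSpace ℝ E]
    (G₁ G₂ : ℝ)
    (L : Fin n → E → ℝ) (hLconv : ∀ i, ConvexOn ℝ Set.univ (L i))
    (hLlip : ∀ i x y, |L i x - L i y| ≤ G₁ * ‖x - y‖)
    (R : E → ℝ) (hRconv : ConvexOn ℝ Set.univ R)
    (hRlip : ∀ x y, |R x - R y| ≤ G₂ * ‖x - y‖)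
    (Lq : E → ℝ)
    (hLq : ∀ θ, Lq θ =
      (1 / (q : ℝ)) * ∑ j : Fin n, gammaR n s q j * sortDesc (fun i => L i θ) j + R θ)
    (θstar : E) (hθstar : ∀ θ, Lq θstar ≤ Lq θ)
    (T : ℕ) (η : ℕ → ℝ) (hη : ∀ t ≤ T, 0 < η t)
    (θ0 : E)
    (Qsel : Finset (Fin n) → E → Finset (Fin n))
    (hQsel : ∀ (S : Finset (Fin n)) (θ : E), S.card = s →
      Qsel S θ ⊆ S ∧ (Qsel S θ).card = q ∧
        ∀ i ∈ Qsel S θ, ∀ k ∈ S \ Qsel S θ, L k θ < L i θ ∨ (L k θ = L i θ ∧ i < k))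
    (θfn gfn : (Fin (T + 1) → {S : Finset (Fin n) // S.card = s}) → ℕ → E)
    (hθ0 : ∀ ω, θfn ω 0 = θ0)
    (hrec : ∀ ω, ∀ t ≤ T, θfn ω (t + 1) = θfn ω t - η t • gfn ω t)
    (hsub : ∀ ω, ∀ (t : ℕ) (ht : t ≤ T), ∀ θ' : E,
      (1 / (q : ℝ)) * (∑ i ∈ Qsel (ω ⟨t, Nat.lt_succ_of_le ht⟩).1 (θfn ω t), L i (θfn ω t))
          + R (θfn ω t) + ⟪gfn ω t, θ' - θfn ω t⟫
        ≤ (1 / (q : ℝ)) * (∑ i ∈ Qsel (ω ⟨t, Nat.lt_succ_of_le ht⟩).1 (θfn ω t), L i θ')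
            + R θ')
    (hdep : ∀ ω ω' (t : ℕ), t ≤ T →
      (∀ t' : Fin (T + 1), t'.val ≤ t → ω t' = ω' t') → gfn ω t = gfn ω' t) :
    (Finset.range (T + 1)).inf' (by simp) (fun t =>
        (((Finset.powersetCard s (Finset.univ : Finset (Fin n))).card : ℝ) ^ (T + 1))⁻¹ *
          ∑ ω : Fin (T + 1) → {S : Finset (Fin n) // S.card = s},
            (Lq (θfn ω t) - Lq θstar))
      ≤ (2 * (G₁ ^ 2 + G₂ ^ 2) * (∑ t ∈ Finset.range (T + 1), η t ^ 2)
            + ‖θstar - θ0‖ ^ 2)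
          / (2 * ∑ t ∈ Finset.range (T + 1), η t) := by
  classical
  have hq0 : (0:ℝ) < q := by exact_mod_cast hq
  set N : ℝ := (Nat.choose n s : ℝ) with hN
  have hN0 : 0 < N := by rw [hN]; exact_mod_cast Nat.choose_pos hsn
  have hcardβ : (Fintype.card {S : Finset (Fin n) // S.card = s} : ℝ) = N := by
    rw [Fintype.card_finset_len, Fintype.card_fin]
  have hNc : ((Finset.powersetCard s (Finset.univ : Finset (Fin n))).card : ℝ) = N := by
    rw [Finset.card_powersetCard, Finset.card_univ, Fintype.card_fin]
  rw [hNc]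
  set M : ℝ := N ^ (T + 1) with hM
  have hM0 : 0 < M := by positivity
  have hcardΩ : (Fintype.card (Fin (T + 1) → {S : Finset (Fin n) // S.card = s}) : ℝ) = M := by
    rw [Fintype.card_fun, Nat.cast_pow, hcardβ, Fintype.card_fin]
  set V : {S : Finset (Fin n) // S.card = s} → E → ℝ := fun S θ =>
    (1 / (q : ℝ)) * (∑ i ∈ Qsel S.1 θ, L i θ) + R θ with hV
  have hVavg : ∀ θ, ∑ S, V S θ = N * Lq θ := by
    intro θ
    have h := aux_avg hqs hsn (fun i => L i θ) (fun S => Qsel S θ) (fun S hS => hQsel S θ hS)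
    simp only [hV]
    rw [Finset.sum_add_distrib, ← Finset.mul_sum, h, hLq, Finset.sum_const, Finset.card_univ,
      nsmul_eq_mul, hcardβ]
    ring
  -- dependence of iterates
  have hθdep : ∀ (t : ℕ) (ht : t < T + 1) ω S t', t' ≤ t →
      θfn (Function.update ω ⟨t, ht⟩ S) t' = θfn ω t' := by
    intro t ht ω S t'
    induction t' with
    | zero => intro _; rw [hθ0, hθ0]
    | succ k ih =>
      intro hk
      rw [hrec _ k (by omega), hrec _ k (by omega), ih (by omega)]
      congr 2
      apply hdep _ _ k (by omega)
      intro t' ht'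
      apply Function.update_of_ne
      intro h
      rw [h] at ht'
      simp only at ht'
      omega
  have hsumV : ∀ (t : ℕ) (ht : t < T + 1), ∑ ω : Fin (T + 1) → {S : Finset (Fin n) // S.card = s}, V (ω ⟨t, ht⟩) (θfn ω t) = ∑ ω : Fin (T + 1) → {S : Finset (Fin n) // S.card = s}, Lq (θfn ω t) := by
    intro t ht
    have h := aux_update (⟨t, ht⟩ : Fin (T + 1)) (fun ω : Fin (T + 1) → {S : Finset (Fin n) // S.card = s} => V (ω ⟨t, ht⟩) (θfn ω t))
    simp only [Function.update_self, hθdep t ht _ _ t le_rfl, hVavg, hcardβ] at h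
    rw [← Finset.mul_sum] at h
    exact (mul_left_cancel₀ hN0.ne' h).symm
  have hsumVs : ∀ (t : ℕ) (ht : t < T + 1), ∑ ω : Fin (T + 1) → {S : Finset (Fin n) // S.card = s}, V (ω ⟨t, ht⟩) θstar = ∑ ω : Fin (T + 1) → {S : Finset (Fin n) // S.card = s}, Lq θstar := by
    intro t ht
    have h := aux_update (⟨t, ht⟩ : Fin (T + 1)) (fun ω : Fin (T + 1) → {S : Finset (Fin n) // S.card = s} => V (ω ⟨t, ht⟩) θstar)
    simp only [Function.update_self, hVavg, hcardβ] at h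
    rw [← Finset.mul_sum] at h
    exact (mul_left_cancel₀ hN0.ne' h).symm
  have hg : ∀ ω t, t ≤ T → ‖gfn ω t‖ ^ 2 ≤ 2 * (G₁ ^ 2 + G₂ ^ 2) := by
    intro ω t ht
    apply aux_sq
    have h := hsub ω t ht (θfn ω t + gfn ω t)
    rw [add_sub_cancel_left] at h
    set Q := Qsel (ω ⟨t, Nat.lt_succ_of_le ht⟩).1 (θfn ω t) with hQd
    have hQc : Q.card = q := (hQsel _ _ (ω ⟨t, Nat.lt_succ_of_le ht⟩).2).2.1
    have h1 : ∑ i ∈ Q, L i (θfn ω t + gfn ω t) ≤ ∑ i ∈ Q, L i (θfn ω t) + q * (G₁ * ‖gfn ω t‖) := by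
      rw [← hQc, ← nsmul_eq_mul, ← Finset.sum_const, ← Finset.sum_add_distrib]
      refine Finset.sum_le_sum fun i _ => ?_
      have := (abs_le.mp (hLlip i (θfn ω t + gfn ω t) (θfn ω t))).2
      rw [add_sub_cancel_left] at this
      linarith
    have h2 := (abs_le.mp (hRlip (θfn ω t + gfn ω t) (θfn ω t))).2
    rw [add_sub_cancel_left] at h2
    have h3 := mul_le_mul_of_nonneg_left h1 (one_div_nonneg.mpr hq0.le)
    rw [mul_add, ← mul_assoc (1 / (q:ℝ)) (q:ℝ), one_div_mul_cancel hq0.ne', one_mul] at h3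
    linarith
  have hstep : ∀ ω t (ht : t < T + 1),
      2 * η t * (V (ω ⟨t, ht⟩) (θfn ω t) - V (ω ⟨t, ht⟩) θstar)
        ≤ ‖θstar - θfn ω t‖ ^ 2 - ‖θstar - θfn ω (t + 1)‖ ^ 2
          + 2 * (G₁ ^ 2 + G₂ ^ 2) * η t ^ 2 := by
    intro ω t ht
    have ht' : t ≤ T := by omega
    have h := hsub ω t ht' θstar
    have htop := aux_top (fun i => L i θstar) (ω ⟨t, ht⟩).1 (Qsel (ω ⟨t, ht⟩).1 θstar)
      (Qsel (ω ⟨t, ht⟩).1 (θfn ω t)) (hQsel _ _ (ω ⟨t, ht⟩).2).2.1 (hQsel _ _ (ω ⟨t, ht⟩).2).2.2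
      (hQsel _ _ (ω ⟨t, ht⟩).2).1 (hQsel _ _ (ω ⟨t, ht⟩).2).2.1
    have htop' := mul_le_mul_of_nonneg_left htop (one_div_nonneg.mpr hq0.le)
    have hin : V (ω ⟨t, ht⟩) (θfn ω t) - V (ω ⟨t, ht⟩) θstar ≤ -⟪gfn ω t, θstar - θfn ω t⟫ := by
      simp only [hV]
      linarith
    have hexp : ‖θstar - θfn ω (t + 1)‖ ^ 2 = ‖θstar - θfn ω t‖ ^ 2
        + 2 * η t * ⟪gfn ω t, θstar - θfn ω t⟫ + η t ^ 2 * ‖gfn ω t‖ ^ 2 := by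
      rw [hrec ω t ht', show θstar - (θfn ω t - η t • gfn ω t) = (θstar - θfn ω t) + η t • gfn ω t by abel,
        norm_add_sq_real, inner_smul_right, norm_smul, mul_pow, Real.norm_eq_abs, sq_abs,
        real_inner_comm]
      ring
    have h5 := mul_le_mul_of_nonneg_left hin (mul_nonneg zero_le_two (hη t ht').le)
    have h6 := mul_le_mul_of_nonneg_left (hg ω t ht') (sq_nonneg (η t))
    rw [hexp]
    linarith
  set A : ℕ → ℝ := fun t => M⁻¹ * ∑ ω : Fin (T + 1) → {S : Finset (Fin n) // S.card = s}, (Lq (θfn ω t) - Lq θstar) with hA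
  set D : ℕ → ℝ := fun t => M⁻¹ * ∑ ω : Fin (T + 1) → {S : Finset (Fin n) // S.card = s}, ‖θstar - θfn ω t‖ ^ 2 with hD
  have hAstep : ∀ t ∈ Finset.range (T + 1),
      2 * η t * A t ≤ (D t - D (t + 1)) + 2 * (G₁ ^ 2 + G₂ ^ 2) * η t ^ 2 := by
    intro t ht
    have ht := Finset.mem_range.mp ht
    have h := Finset.sum_le_sum (s := Finset.univ) fun (ω : Fin (T + 1) → {S : Finset (Fin n) // S.card = s}) _ => hstep ω t ht
    rw [← Finset.mul_sum, Finset.sum_sub_distrib, hsumV t ht, hsumVs t ht] at h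
    simp only [Finset.sum_add_distrib, Finset.sum_sub_distrib, Finset.sum_const, Finset.card_univ,
      nsmul_eq_mul, hcardΩ] at h
    have h2 := mul_le_mul_of_nonneg_left h (inv_nonneg.mpr hM0.le)
    rw [mul_add, ← mul_assoc M⁻¹ M, inv_mul_cancel₀ hM0.ne'] at h2
    simp only [hA, hD, Finset.sum_sub_distrib, Finset.sum_const, Finset.card_univ,
      nsmul_eq_mul, hcardΩ]
    linarith
  have hD0 : D 0 = ‖θstar - θ0‖ ^ 2 := by
    simp only [hD, hθ0]
    rw [Finset.sum_const, Finset.card_univ, nsmul_eq_mul, hcardΩ, ← mul_assoc,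
      inv_mul_cancel₀ hM0.ne', one_mul]
  have hDT : 0 ≤ D (T + 1) := by
    simp only [hD]; positivity
  have hsum := Finset.sum_le_sum hAstep
  rw [Finset.sum_add_distrib, Finset.sum_range_sub', hD0, ← Finset.mul_sum] at hsum
  have hηpos : 0 < ∑ t ∈ Finset.range (T + 1), η t :=
    Finset.sum_pos (fun t ht => hη t (by have := Finset.mem_range.mp ht; omega)) (by simp)
  rw [le_div_iff₀ (by positivity), mul_comm, Finset.mul_sum, Finset.sum_mul]
  refine le_trans (Finset.sum_le_sum (g := fun t => 2 * η t * A t) fun t ht => ?_) (by linarith)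
  refine mul_le_mul_of_nonneg_left (Finset.inf'_le _ ht) ?_
  have := hη t (by have := Finset.mem_range.mp ht; omega)
  positivity
end

section
/- Let n ≥ 1 be an integer, let a, a' ∈ ℝ^n, and suppose there is an index i₀ such that a_i = a'_i for all i ≠ i₀. Then ∑_{j=1}^{n} | a_{(j)} − a'_{(j)} | = | a_{i₀} − a'_{i₀} |, where a_{(1)} ≥ ⋯ ≥ a_{(n)} and a'_{(1)} ≥ ⋯ ≥ a'_{(n)} are the sorted (nonincreasing) rearrangements of a and a'. (This is the telescoping bound on order statistics established in the proof of Theorem 3.) -/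
theorem sortDesc_anti {n : ℕ} (a : Fin n → ℝ) {j k : Fin n} (h : j ≤ k) :
    sortDesc a k ≤ sortDesc a j := by
  have := Tuple.monotone_sort (fun i => -a i) h
  simp only [Function.comp] at this
  unfold sortDesc
  linarith

theorem sortDesc_sum {n : ℕ} (a : Fin n → ℝ) : ∑ j, sortDesc a j = ∑ j, a j :=
  Equiv.sum_comp (Tuple.sort (fun i => -a i)) a

theorem sortDesc_mono {n : ℕ} {a b : Fin n → ℝ} (h : ∀ i, a i ≤ b i) (j : Fin n) :
    sortDesc a j ≤ sortDesc b j := by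
  set σ := Tuple.sort (fun i => -a i) with hσ
  set τ := Tuple.sort (fun i => -b i) with hτ
  have key : ∃ k ≤ j, j ≤ τ.symm (σ k) := by
    by_contra hc
    push Not at hc
    have := Finset.card_le_card_of_injOn (s := Finset.Iic j) (t := Finset.Iio j)
      (fun k => τ.symm (σ k)) (fun k hk => by simpa using hc k (by simpa using hk))
      (fun x _ y _ hxy => by simpa using hxy)
    simp at this
  obtain ⟨k, hk, hl⟩ := key
  have h1 := sortDesc_anti a hk
  have h2 := sortDesc_anti b hl
  have e1 : sortDesc a k = a (σ k) := rfl
  have e2 : sortDesc b (τ.symm (σ k)) = b (τ (τ.symm (σ k))) := rfl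
  rw [Equiv.apply_symm_apply] at e2
  linarith [h (σ k)]

theorem stmt_17_aux {n : ℕ} (a a' : Fin n → ℝ) (i₀ : Fin n)
    (h : ∀ i, i ≠ i₀ → a i = a' i) (h0 : a i₀ ≤ a' i₀) :
    ∑ j : Fin n, |sortDesc a j - sortDesc a' j| = |a i₀ - a' i₀| := by
  have hle : ∀ i, a i ≤ a' i := fun i => by
    by_cases hi : i = i₀
    · rw [hi]; exact h0
    · exact (h i hi).le
  have : ∀ j, |sortDesc a j - sortDesc a' j| = sortDesc a' j - sortDesc a j := fun j => by
    rw [abs_sub_comm, abs_of_nonneg (sub_nonneg.2 (sortDesc_mono hle j))]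
  simp only [this]
  rw [Finset.sum_sub_distrib, sortDesc_sum, sortDesc_sum, ← Finset.sum_sub_distrib,
    abs_sub_comm, abs_of_nonneg (sub_nonneg.2 h0)]
  exact Finset.sum_eq_single i₀ (fun i _ hi => by rw [h i hi, sub_self]) (by simp)

/-- telescoping bound on order statistics from the proof of Theorem 3.
If `a, a' ∈ ℝⁿ` differ in at most the single coordinate `i₀`, then
`∑_j |a_{(j)} − a'_{(j)}| = |a_{i₀} − a'_{i₀}|`. -/
theorem stmt_17 (n : ℕ) (hn : 1 ≤ n) (a a' : Fin n → ℝ) (i₀ : Fin n)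
    (h : ∀ i, i ≠ i₀ → a i = a' i) :
    ∑ j : Fin n, |sortDesc a j - sortDesc a' j| = |a i₀ - a' i₀| := by
  rcases le_total (a i₀) (a' i₀) with h0 | h0
  · exact stmt_17_aux a a' i₀ h h0
  · have := stmt_17_aux a' a i₀ (fun i hi => (h i hi).symm) h0
    rw [abs_sub_comm (a i₀), ← this]
    exact Finset.sum_congr rfl fun j _ => abs_sub_comm _ _
end
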